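/- arXiv:1710.09143 — 3 statements merged into one kernel-verified Lean document; each statement's English description precedes it below -/
import Mathlib

section
/- There exists a constant c₀ > 0 such that for every prime power q and all integers d ≥ 1, k ≥ 2, the multicolor discrepancy of the trace function satisfies −log₂ disc_k(T_{q,d,k}) ≥ c₀ · d² · log₂ q / (k² · 2^k). -/
/-- Transcript of `c` bits, each bit determined from the previous transcript. -/
def buildTranscript (step : List Bool → Bool) : ℕ → List Bool
  | 0 => []
  | m + 1 => buildTranscript step m ++ [step (buildTranscript step m)]

/-- A deterministic number-on-the-forehead style protocol with `k` players on input
space `I`, where `Vis i x x'` means player `i` cannot distinguish the inputs `x` and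
`x'` (player `i` sees everything except their own input).  The protocol runs for
exactly `c` rounds; in each round a speaker, determined by the transcript so far,
writes one bit on the blackboard, and this bit may depend only on the part of the
input that the speaker sees.  The output is determined by the full transcript. -/
structure DProt (k : ℕ) (I : Type) (Vis : Fin k → I → I → Prop) (Y : Type) (c : ℕ) where
  speaker : List Bool → Fin k
  msg : List Bool → I → Bool
  msg_nof : ∀ t x x', Vis (speaker t) x x' → msg t x = msg t x'
  out : List Bool → Y

def DProt.run {k I Vis Y c} (P : DProt k I Vis Y c) (x : I) : Y :=
  P.out (buildTranscript (fun t => P.msg t x) c)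

/-- Deterministic NOF communication complexity of `f` restricted to `S`. -/
noncomputable def DCC {k : ℕ} {I Y : Type} (Vis : Fin k → I → I → Prop)
    (f : I → Y) (S : Set I) : ℕ :=
  sInf { c | ∃ P : DProt k I Vis Y c, ∀ x ∈ S, P.run x = f x }

/-- A nondeterministic protocol: a prover first provides a proof string of `a` bits,
after which the players communicate `c` bits as in a deterministic protocol (the bits
may depend on the proof). -/
structure NProt (k : ℕ) (I : Type) (Vis : Fin k → I → I → Prop) (Y : Type) (a c : ℕ) where
  speaker : (Fin a → Bool) → List Bool → Fin k
  msg : (Fin a → Bool) → List Bool → I → Bool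
  msg_nof : ∀ p t x x', Vis (speaker p t) x x' → msg p t x = msg p t x'
  out : (Fin a → Bool) → List Bool → Y

def NProt.run {k I Vis Y a c} (P : NProt k I Vis Y a c) (p : Fin a → Bool) (x : I) : Y :=
  P.out p (buildTranscript (fun t => P.msg p t x) c)

/-- Nondeterministic NOF complexity `N_k(A, S)` of the search problem for `A : I → Y`
restricted to `S`: minimum cost (proof length plus communication) of a protocol which
on every input outputs either a value in `Y` or `none` (i.e. "don't know"), never
outputs a wrong value on inputs in `S`, and on every input of `S` has at least one
proof leading to the correct value. -/
noncomputable def NCC {k : ℕ} {I Y : Type} (Vis : Fin k → I → I → Prop)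
    (A : I → Y) (S : Set I) : ℕ :=
  sInf { m | ∃ a c, m = a + c ∧ ∃ P : NProt k I Vis (Option Y) a c,
    ∀ x ∈ S, (∀ p, P.run p x = none ∨ P.run p x = some (A x)) ∧
      ∃ p, P.run p x = some (A x) }

/-- Nondeterministic NOF complexity `N¹_k(f)` of a boolean function `f`: on every
1-input some proof leads to output `true`, and on every 0-input all proofs lead to
output `false`.  The cost is proof length plus communication. -/
noncomputable def NCCbool {k : ℕ} {I : Type} (Vis : Fin k → I → I → Prop)
    (f : I → Bool) : ℕ :=
  sInf { m | ∃ a c, m = a + c ∧ ∃ P : NProt k I Vis Bool a c,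
    ∀ x, f x = true ↔ ∃ p, P.run p x = true }

/-- Deterministic NOF communication complexity with `b` help bits:
`min` over `t ≤ b` and partitions of the input space into `2 ^ t` parts (given by a
coloring `H`) of `t` plus the maximal complexity of a part. -/
noncomputable def DHelp {k : ℕ} {I Y : Type} (Vis : Fin k → I → I → Prop)
    (A : I → Y) (b : ℕ) : ℕ :=
  sInf { m | ∃ t ≤ b, ∃ H : I → Fin (2 ^ t),
    m = t + Finset.univ.sup fun i => DCC Vis A (H ⁻¹' {i}) }

/-- Nondeterministic NOF communication complexity with `b` help bits. -/
noncomputable def NHelp {k : ℕ} {I Y : Type} (Vis : Fin k → I → I → Prop)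
    (A : I → Y) (b : ℕ) : ℕ :=
  sInf { m | ∃ t ≤ b, ∃ H : I → Fin (2 ^ t),
    m = t + Finset.univ.sup fun i => NCC Vis A (H ⁻¹' {i}) }

/-- A one-way protocol: player `last` first sends a message of `a` bits (depending
only on what they see), after which the remaining players communicate `c` more bits
without the participation of player `last`. -/
structure OWProt (k : ℕ) (I : Type) (Vis : Fin k → I → I → Prop) (Y : Type)
    (last : Fin k) (a c : ℕ) where
  pre : I → Fin a → Bool
  pre_nof : ∀ x x', Vis last x x' → pre x = pre x'
  speaker : (Fin a → Bool) → List Bool → Fin k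
  speaker_ne : ∀ p t, speaker p t ≠ last
  msg : (Fin a → Bool) → List Bool → I → Bool
  msg_nof : ∀ p t x x', Vis (speaker p t) x x' → msg p t x = msg p t x'
  out : (Fin a → Bool) → List Bool → Y

def OWProt.run {k I Vis Y last a c} (P : OWProt k I Vis Y last a c) (x : I) : Y :=
  P.out (P.pre x) (buildTranscript (fun t => P.msg (P.pre x) t x) c)

/-- One-way NOF communication complexity `D¹_k(f)`, where player `last` speaks first
(a single message) and then the other players communicate. -/
noncomputable def OWCC {k : ℕ} {I Y : Type} (Vis : Fin k → I → I → Prop)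
    (f : I → Y) (last : Fin k) : ℕ :=
  sInf { m | ∃ a c, m = a + c ∧ ∃ P : OWProt k I Vis Y last a c, ∀ x, P.run x = f x }

/-- Standard NOF visibility: player `i` sees all coordinates except the `i`-th one. -/
def nofVis (k : ℕ) (W : Type) : Fin k → (Fin k → W) → (Fin k → W) → Prop :=
  fun i x x' => ∀ j, j ≠ i → x j = x' j

/-- NOF visibility for `k` players on inputs in `(Fin (k-1) → W) × Z`: players
`0, …, k-2` hold the coordinates of the first component on their foreheads, and the
`k`-th player (index `k-1`) holds the second component. -/
def liftVis (k : ℕ) (W Z : Type) :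
    Fin k → ((Fin (k - 1) → W) × Z) → ((Fin (k - 1) → W) × Z) → Prop :=
  fun i z z' => (∀ j : Fin (k - 1), (j : ℕ) ≠ (i : ℕ) → z.1 j = z'.1 j) ∧
    ((i : ℕ) = k - 1 ∨ z.2 = z'.2)

/-- `C` is a cylinder in coordinate `i`: membership does not depend on coordinate `i`. -/
def IsCylinder (k : ℕ) (W : Type) (i : Fin k) (C : Set (Fin k → W)) : Prop :=
  ∀ x x', (∀ j, j ≠ i → x j = x' j) → (x ∈ C ↔ x' ∈ C)

/-- `C` is a cylinder intersection: an intersection of cylinders, one per coordinate. -/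
def IsCylinderIntersection (k : ℕ) (W : Type) (C : Set (Fin k → W)) : Prop :=
  ∃ Cs : Fin k → Set (Fin k → W), (∀ i, IsCylinder k W i (Cs i)) ∧ C = ⋂ i, Cs i

/-- `disc(A, S, y) = | |A⁻¹(y) ∩ S| - |S| / N | / |X|` where `N` is the number of
colors and `X` is the input space. -/
noncomputable def discVal (k : ℕ) (W Y : Type) (A : (Fin k → W) → Y)
    (S : Set (Fin k → W)) (y : Y) : ℝ :=
  |(Nat.card ↥(A ⁻¹' {y} ∩ S) : ℝ) - (Nat.card ↥S : ℝ) / (Nat.card Y : ℝ)| /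
    (Nat.card (Fin k → W) : ℝ)

/-- Multicolor discrepancy of `A`: the supremum of `disc(A, S, y)` over all cylinder
intersections `S` and all colors `y`. -/
noncomputable def multiDisc (k : ℕ) (W Y : Type) (A : (Fin k → W) → Y) : ℝ :=
  sSup { d : ℝ | ∃ S y, IsCylinderIntersection k W S ∧ d = discVal k W Y A S y }

open Classical in
/-- Probability that `A * D₁ * ⋯ * Dₙ = 0` for uniformly random `Dᵢ`. -/
noncomputable def pz {F : Type} [Field F] [Fintype F] {d : ℕ} :
    ℕ → Matrix (Fin d) (Fin d) F → ℝ
  | 0, A => if A = 0 then 1 else 0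
  | n + 1, A => (∑ D : Matrix (Fin d) (Fin d) F, pz n (A * D)) /
      (Fintype.card (Matrix (Fin d) (Fin d) F) : ℝ)

lemma pz_nonneg {F : Type} [Field F] [Fintype F] {d : ℕ} (n : ℕ)
    (A : Matrix (Fin d) (Fin d) F) : 0 ≤ pz n A := by
  induction n generalizing A with
  | zero => unfold pz; split_ifs <;> norm_num
  | succ n ih => unfold pz; exact div_nonneg (Finset.sum_nonneg fun D _ => ih _) (by positivity)

lemma pz_le_one {F : Type} [Field F] [Fintype F] {d : ℕ} (n : ℕ)
    (A : Matrix (Fin d) (Fin d) F) : pz n A ≤ 1 := by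
  classical
  induction n generalizing A with
  | zero => unfold pz; split_ifs <;> norm_num
  | succ n ih =>
    unfold pz
    apply div_le_one_of_le₀ _ (by positivity)
    refine (Finset.sum_le_sum fun D _ => ih _).trans ?_
    simp

lemma char_base {F : Type} [Field F] [Fintype F] {d : ℕ} (ψ : AddChar F ℂ) (hψ : ψ ≠ 1)
    (A : Matrix (Fin d) (Fin d) F) (hA : A ≠ 0) :
    ∑ B : Matrix (Fin d) (Fin d) F, ψ (Matrix.trace (A * B)) = 0 := by
  classical
  let φ : AddChar (Matrix (Fin d) (Fin d) F) ℂ :=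
    { toFun := fun B => ψ (Matrix.trace (A * B))
      map_zero_eq_one' := by simp
      map_add_eq_mul' := by
        intro a b
        rw [Matrix.mul_add, Matrix.trace_add, AddChar.map_add_eq_mul] }
  have h : φ ≠ 0 := by
    intro h0
    apply hψ
    ext t
    obtain ⟨i, j, hij⟩ : ∃ i j, A i j ≠ 0 := by
      by_contra hcon
      push Not at hcon
      exact hA (Matrix.ext hcon)
    have := DFunLike.congr_fun h0 (Matrix.single j i ((A i j)⁻¹ * t))
    change ψ (Matrix.trace (A * _)) = 1 at this
    rw [Matrix.trace_mul_single] at this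
    simpa [hij] using this
  have h2 := AddChar.sum_eq_zero_iff_ne_zero.2 h
  exact h2

lemma sum_cons {W : Type} [Fintype W] {n : ℕ} (f : (Fin (n + 1) → W) → ℂ) :
    ∑ B, f B = ∑ B' : Fin n → W, ∑ x : W, f (Fin.cons x B') := by
  classical
  rw [← (Fin.consEquiv (fun _ : Fin (n + 1) => W)).sum_comp, Fintype.sum_prod_type,
    Finset.sum_comm]
  rfl

lemma cs_step {X W : Type} [Fintype X] [Fintype W] (c : X → ℂ) (hc : ∀ b, ‖c b‖ ≤ 1)
    (h : W → X → ℂ) :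
    ‖∑ b, ∑ x, c b * h x b‖ ^ 2 ≤
      (Fintype.card X : ℝ) *
        ∑ z : W × W, ‖∑ b, h z.1 b * (starRingEnd ℂ) (h z.2 b)‖ := by
  have h1 : ‖∑ b, ∑ x, c b * h x b‖ ≤ ∑ b, 1 * ‖∑ x, h x b‖ := by
    refine (norm_sum_le _ _).trans (Finset.sum_le_sum fun b _ => ?_)
    rw [← Finset.mul_sum, norm_mul]
    exact mul_le_mul_of_nonneg_right (hc b) (norm_nonneg _)
  have h2 := Finset.sum_mul_sq_le_sq_mul_sq Finset.univ (fun _ : X => (1:ℝ))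
    (fun b => ‖∑ x, h x b‖)
  have h3 : ((∑ b, ‖∑ x, h x b‖ ^ 2 : ℝ) : ℂ) =
      ∑ z : W × W, ∑ b, h z.1 b * (starRingEnd ℂ) (h z.2 b) := by
    rw [Finset.sum_comm]
    push_cast
    refine Finset.sum_congr rfl fun b _ => ?_
    rw [← Complex.mul_conj', map_sum, Finset.sum_mul_sum, Fintype.sum_prod_type]
  have h4 : (∑ b, ‖∑ x, h x b‖ ^ 2 : ℝ) ≤
      ∑ z : W × W, ‖∑ b, h z.1 b * (starRingEnd ℂ) (h z.2 b)‖ := by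
    have h5 : (∑ b, ‖∑ x, h x b‖ ^ 2 : ℝ) = ‖((∑ b, ‖∑ x, h x b‖ ^ 2 : ℝ) : ℂ)‖ := by
      rw [Complex.norm_real, Real.norm_of_nonneg (by positivity)]
    rw [h5, h3]
    exact norm_sum_le _ _
  calc _ ≤ (∑ b, 1 * ‖∑ x, h x b‖) ^ 2 := by gcongr
    _ ≤ _ := h2
    _ ≤ _ := by
      simp only [one_pow, Finset.sum_const, Finset.card_univ, nsmul_eq_mul, mul_one]
      gcongr

lemma bns {F : Type} [Field F] [Fintype F] {d : ℕ} (ψ : AddChar F ℂ) (hψ : ψ ≠ 1) (n : ℕ)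
    (A : Matrix (Fin d) (Fin d) F)
    (C : Fin (n + 1) → (Fin (n + 1) → Matrix (Fin d) (Fin d) F) → ℂ)
    (hC : ∀ i B, ‖C i B‖ ≤ 1)
    (hcyl : ∀ i B B', (∀ j, j ≠ i → B j = B' j) → C i B = C i B') :
    ‖∑ B : Fin (n + 1) → Matrix (Fin d) (Fin d) F,
        ψ (Matrix.trace (A * (List.ofFn B).prod)) * ∏ i, C i B‖ ^ 2 ^ n ≤
      ((Fintype.card (Matrix (Fin d) (Fin d) F) : ℝ) ^ (n + 1)) ^ 2 ^ n * pz n A := by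
  classical
  induction n generalizing A with
  | zero =>
    have hc : ∀ B, C 0 B = C 0 0 := fun B => hcyl 0 _ _ (by
      intro j hj; exact absurd (Fin.fin_one_eq_zero j) hj)
    rw [sum_cons]
    have hp : ∀ B, ∏ i, C i B = C 0 B := fun B => Fin.prod_univ_one (fun i => C i B)
    have hl : ∀ (x : Matrix (Fin d) (Fin d) F) (b : Fin 0 → Matrix (Fin d) (Fin d) F),
        (List.ofFn (Fin.cons x b : Fin (0 + 1) → Matrix (Fin d) (Fin d) F)).prod = x := by
      intro x b
      rw [List.ofFn_succ, List.ofFn_zero, List.prod_cons, List.prod_nil, mul_one]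
      rfl
    have hE : (∑ b : Fin 0 → Matrix (Fin d) (Fin d) F, ∑ x : Matrix (Fin d) (Fin d) F,
        ψ (Matrix.trace (A * (List.ofFn (Fin.cons x b :
          Fin (0 + 1) → Matrix (Fin d) (Fin d) F)).prod)) * ∏ i, C i (Fin.cons x b)) =
        (∑ x, ψ (A * x).trace) * C 0 0 := by
      rw [Fintype.sum_unique, Finset.sum_mul]
      refine Finset.sum_congr rfl fun x _ => ?_
      rw [hl, hp, hc]
    rw [hE]
    simp only [pow_zero, pow_one, zero_add]
    by_cases hA : A = 0
    · subst hA
      simp only [pz, if_true, mul_one, zero_mul, Matrix.trace_zero, AddChar.map_zero_eq_one,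
        Finset.sum_const, Finset.card_univ, nsmul_eq_mul, norm_mul, Complex.norm_natCast]
      exact mul_le_of_le_one_right (by positivity) (hC _ _)
    · rw [char_base ψ hψ A hA]
      simp [pz, hA]
  | succ n ih =>
    set N : ℝ := (Fintype.card (Matrix (Fin d) (Fin d) F) : ℝ) with hN
    have hNpos : 0 < N := by rw [hN]; exact_mod_cast Fintype.card_pos
    let c : (Fin (n + 1) → Matrix (Fin d) (Fin d) F) → ℂ := fun b => C 0 (Fin.cons 0 b)
    let h : Matrix (Fin d) (Fin d) F → (Fin (n + 1) → Matrix (Fin d) (Fin d) F) → ℂ :=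
      fun x b => ψ (Matrix.trace (A * x * (List.ofFn b).prod)) *
        ∏ i : Fin (n + 1), C i.succ (Fin.cons x b)
    have e1 : ∑ B : Fin (n + 1 + 1) → Matrix (Fin d) (Fin d) F,
        ψ (Matrix.trace (A * (List.ofFn B).prod)) * ∏ i, C i B = ∑ b, ∑ x, c b * h x b := by
      rw [sum_cons]
      refine Finset.sum_congr rfl fun b _ => Finset.sum_congr rfl fun x _ => ?_
      have h0 : C 0 (Fin.cons x b) = c b := by
        apply hcyl
        intro j hj
        obtain ⟨j, rfl⟩ := Fin.exists_succ_eq.2 hj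
        simp
      rw [Fin.prod_univ_succ, h0, List.ofFn_succ, List.prod_cons]
      simp only [Fin.cons_zero, Fin.cons_succ, h, Matrix.mul_assoc]
      ring
    rw [e1, pow_succ', pow_mul]
    have h1 := cs_step c (fun b => hC _ _) h
    have hG : ∀ z : Matrix (Fin d) (Fin d) F × Matrix (Fin d) (Fin d) F,
        ‖∑ b, h z.1 b * (starRingEnd ℂ) (h z.2 b)‖ ^ 2 ^ n ≤
          (N ^ (n + 1)) ^ 2 ^ n * pz n (A * (z.1 - z.2)) := by
      rintro ⟨x, y⟩
      have := ih (A * (x - y))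
        (fun i b => C i.succ (Fin.cons x b) * (starRingEnd ℂ) (C i.succ (Fin.cons y b)))
        (by
          intro i b
          rw [norm_mul, RCLike.norm_conj]
          exact mul_le_one₀ (hC _ _) (norm_nonneg _) (hC _ _))
        (by
          intro i b b' hb
          have : ∀ x, C i.succ (Fin.cons x b) = C i.succ (Fin.cons x b') := by
            intro x
            apply hcyl
            intro j hj
            refine Fin.cases ?_ (fun j hj => ?_) j hj
            · simp
            · simp only [Fin.cons_succ]
              exact hb j (fun h => hj (by rw [h]))
          simp only [this])
      refine le_of_eq_of_le ?_ this
      congr 2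
      refine Finset.sum_congr rfl fun b _ => ?_
      simp only [h, map_mul, map_prod, Finset.prod_mul_distrib]
      rw [Matrix.mul_sub, Matrix.sub_mul, Matrix.trace_sub, sub_eq_add_neg,
        AddChar.map_add_eq_mul, AddChar.map_neg_eq_conj]
      ring
    have hJ := pow_sum_div_card_le_sum_pow
      (s := (Finset.univ : Finset (Matrix (Fin d) (Fin d) F × Matrix (Fin d) (Fin d) F)))
      (f := fun z => ‖∑ b, h z.1 b * (starRingEnd ℂ) (h z.2 b)‖)
      (fun _ _ => norm_nonneg _) (2 ^ n - 1)
    have hpow : 2 ^ n - 1 + 1 = 2 ^ n := Nat.sub_add_cancel Nat.one_le_two_pow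
    rw [hpow] at hJ
    have hcard : ((Finset.univ : Finset (Matrix (Fin d) (Fin d) F ×
        Matrix (Fin d) (Fin d) F)).card : ℝ) = N ^ 2 := by
      rw [Finset.card_univ, Fintype.card_prod, Nat.cast_mul, hN, sq]
    rw [hcard, div_le_iff₀ (by positivity)] at hJ
    have hsum : ∑ z : Matrix (Fin d) (Fin d) F × Matrix (Fin d) (Fin d) F,
        pz n (A * (z.1 - z.2)) = N ^ 2 * pz (n + 1) A := by
      rw [Fintype.sum_prod_type, Finset.sum_comm]
      have : ∀ y : Matrix (Fin d) (Fin d) F, ∑ x, pz n (A * (x - y)) = N * pz (n + 1) A := by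
        intro y
        have e := (Equiv.subRight y).sum_comp (fun x => pz n (A * x))
        simp only [Equiv.subRight_apply] at e
        rw [e, pz, ← hN, mul_div_cancel₀ _ hNpos.ne']
      simp only [this, Finset.sum_const, Finset.card_univ, nsmul_eq_mul]
      rw [← hN]; ring
    have hX : (Fintype.card (Fin (n + 1) → Matrix (Fin d) (Fin d) F) : ℝ) = N ^ (n + 1) := by
      rw [Fintype.card_fun, Fintype.card_fin, Nat.cast_pow, hN]
    rw [hX] at h1
    calc _ ≤ (N ^ (n + 1) *
        ∑ z : Matrix (Fin d) (Fin d) F × Matrix (Fin d) (Fin d) F,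
          ‖∑ b, h z.1 b * (starRingEnd ℂ) (h z.2 b)‖) ^ 2 ^ n := by gcongr
      _ = (N ^ (n + 1)) ^ 2 ^ n * (∑ z : Matrix (Fin d) (Fin d) F × Matrix (Fin d) (Fin d) F,
          ‖∑ b, h z.1 b * (starRingEnd ℂ) (h z.2 b)‖) ^ 2 ^ n := mul_pow _ _ _
      _ ≤ (N ^ (n + 1)) ^ 2 ^ n * ((∑ z : Matrix (Fin d) (Fin d) F × Matrix (Fin d) (Fin d) F,
          ‖∑ b, h z.1 b * (starRingEnd ℂ) (h z.2 b)‖ ^ 2 ^ n) * (N ^ 2) ^ (2 ^ n - 1)) := by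
        gcongr
      _ ≤ (N ^ (n + 1)) ^ 2 ^ n * ((∑ z : Matrix (Fin d) (Fin d) F × Matrix (Fin d) (Fin d) F,
          (N ^ (n + 1)) ^ 2 ^ n * pz n (A * (z.1 - z.2))) * (N ^ 2) ^ (2 ^ n - 1)) := by
        gcongr with z
        exact hG z
      _ = (N ^ (n + 1)) ^ 2 ^ n * (N ^ (n + 1)) ^ 2 ^ n * (N ^ 2) ^ (2 ^ n - 1 + 1)
            * pz (n + 1) A := by
        rw [← Finset.mul_sum, hsum, pow_succ]; ring
      _ = _ := by
        rw [hpow, ← mul_pow, ← mul_pow, pow_mul]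
        congr 2
        ring

lemma card_mat {F : Type} [Fintype F] {a b : ℕ} :
    Fintype.card (Matrix (Fin a) (Fin b) F) = Fintype.card F ^ (a * b) := by
  rw [← Nat.card_eq_fintype_card]
  change Nat.card (Fin a → Fin b → F) = _
  rw [Nat.card_fun, Nat.card_fun]
  simp [← pow_mul, mul_comm]

/-- Dimension of the kernel of a square matrix. -/
noncomputable def cork {F : Type} [Field F] {d : ℕ} (A : Matrix (Fin d) (Fin d) F) : ℕ :=
  Module.finrank F (LinearMap.ker A.mulVecLin)

lemma cork_mul {F : Type} [Field F] {d : ℕ} (A B : Matrix (Fin d) (Fin d) F) :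
    cork (A * B) ≤ cork A + cork B := by
  unfold cork
  rw [Matrix.mulVecLin_mul]
  set f := A.mulVecLin
  set g := B.mulVecLin
  let g' := g.domRestrict (LinearMap.ker (f ∘ₗ g))
  rw [← LinearMap.finrank_range_add_finrank_ker g']
  apply add_le_add
  · apply Submodule.finrank_mono
    rintro _ ⟨⟨x, hx⟩, rfl⟩
    simpa [g'] using hx
  · let ι : LinearMap.ker g' →ₗ[F] LinearMap.ker g :=
      LinearMap.codRestrict _ ((Submodule.subtype _).comp (Submodule.subtype _)) (by
        rintro ⟨x, hx⟩
        simpa [g'] using hx)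
    apply LinearMap.finrank_le_finrank_of_injective (f := ι)
    intro x y hxy
    have := congrArg Subtype.val hxy
    exact Subtype.ext (Subtype.ext this)

lemma count_kill {F : Type} [Field F] [Fintype F] {d r : ℕ} (V : Matrix (Fin d) (Fin r) F)
    (hV : LinearIndependent F V.col) :
    Nat.card {D : Matrix (Fin d) (Fin d) F // D * V = 0} * Fintype.card F ^ (d * r) ≤
      Fintype.card F ^ (d * d) := by
  classical
  obtain ⟨g, hg⟩ := LinearMap.exists_leftInverse_of_injective V.mulVecLin
    (LinearMap.ker_eq_bot.2 (Matrix.mulVec_injective_iff.2 hV))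
  have hU : (LinearMap.toMatrix' g) * V = 1 := by
    have := congrArg LinearMap.toMatrix' hg
    rw [LinearMap.toMatrix'_comp, LinearMap.toMatrix'_id] at this
    have e : LinearMap.toMatrix' V.mulVecLin = V := LinearMap.toMatrix'_toLin' V
    rwa [e] at this
  set U := LinearMap.toMatrix' g
  let φ : {D : Matrix (Fin d) (Fin d) F // D * V = 0} × Matrix (Fin d) (Fin r) F →
    Matrix (Fin d) (Fin d) F := fun p => p.1.1 + p.2 * U
  have hφ : Function.Injective φ := by
    rintro ⟨⟨D, hD⟩, Y⟩ ⟨⟨D', hD'⟩, Y'⟩ h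
    simp only [φ] at h
    have h2 := congrArg (· * V) h
    simp only [Matrix.add_mul, Matrix.mul_assoc, hU, hD, hD', Matrix.mul_one, zero_add] at h2
    subst h2
    simpa using h
  have := Nat.card_le_card_of_injective φ hφ
  rw [Nat.card_prod] at this
  rwa [Nat.card_eq_fintype_card (α := Matrix _ _ _), Nat.card_eq_fintype_card (α := Matrix _ _ _),
    card_mat, card_mat] at this

lemma count_indep {F : Type} [Field F] [Fintype F] {d r : ℕ} (D : Matrix (Fin d) (Fin d) F)
    (hD : r ≤ cork D) :
    Fintype.card F ^ (r * (r - 1)) * (Fintype.card F - 1) ^ r ≤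
      Nat.card {V : Matrix (Fin d) (Fin r) F // LinearIndependent F V.col ∧ D * V = 0} := by
  classical
  have h1 := card_linearIndependent (K := F) (V := LinearMap.ker D.mulVecLin) (k := r) hD
  have h2 : Fintype.card F ^ (r * (r - 1)) * (Fintype.card F - 1) ^ r ≤
      Nat.card { s : Fin r → LinearMap.ker D.mulVecLin // LinearIndependent F s } := by
    rw [h1]
    have : Fintype.card F ^ (r * (r - 1)) * (Fintype.card F - 1) ^ r =
        ∏ i : Fin r, (Fintype.card F ^ (r - 1) * (Fintype.card F - 1)) := by
      rw [Finset.prod_const, Finset.card_univ, Fintype.card_fin, mul_pow, ← pow_mul,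
        mul_comm (r - 1)]
    rw [this]
    apply Finset.prod_le_prod' 
    intro i _
    have hq : 1 ≤ Fintype.card F := Fintype.card_pos
    have a1 : Fintype.card F ^ (i : ℕ) ≤ Fintype.card F ^ (r - 1) :=
      Nat.pow_le_pow_right hq (by omega)
    have a2 : Fintype.card F ^ r ≤ Fintype.card F ^ Module.finrank F (LinearMap.ker D.mulVecLin) :=
      Nat.pow_le_pow_right hq hD
    have a3 : Fintype.card F ^ (r - 1) * (Fintype.card F - 1) =
        Fintype.card F ^ r - Fintype.card F ^ (r - 1) := by
      rw [Nat.mul_sub, mul_one, ← pow_succ, Nat.sub_add_cancel (by have := i.2; omega)]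
    omega
  refine h2.trans ?_
  let φ : { s : Fin r → LinearMap.ker D.mulVecLin // LinearIndependent F s } →
      {V : Matrix (Fin d) (Fin r) F // LinearIndependent F V.col ∧ D * V = 0} :=
    fun s => ⟨Matrix.of fun i j => (s.1 j).1 i, by
      refine ⟨?_, ?_⟩
      · have := s.2.map' (Submodule.subtype _) (Submodule.ker_subtype _)
        exact this
      · ext i j
        have := (s.1 j).2
        rw [LinearMap.mem_ker] at this
        exact congrFun this i⟩
  apply Nat.card_le_card_of_injective φ
  intro s t h
  apply Subtype.ext
  funext j
  apply Subtype.ext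
  funext i
  have := congrArg Subtype.val h
  exact congrFun (congrFun this i) j

lemma count_bad {F : Type} [Field F] [Fintype F] {d r : ℕ} :
    Nat.card {D : Matrix (Fin d) (Fin d) F // r ≤ cork D} *
      (Fintype.card F ^ (r * (r - 1)) * (Fintype.card F - 1) ^ r) ≤
      Fintype.card F ^ (d * d) := by
  classical
  have hq : 0 < Fintype.card F := Fintype.card_pos
  set G := Fintype.card F ^ (r * (r - 1)) * (Fintype.card F - 1) ^ r
  let P : Matrix (Fin d) (Fin d) F → Matrix (Fin d) (Fin r) F → Prop :=
    fun D V => LinearIndependent F V.col ∧ D * V = 0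
  have h1 : Nat.card {D : Matrix (Fin d) (Fin d) F // r ≤ cork D} * G ≤
      ∑ D : Matrix (Fin d) (Fin d) F, ∑ V : Matrix (Fin d) (Fin r) F, if P D V then 1 else 0 := by
    calc _ = ∑ D : Matrix (Fin d) (Fin d) F, if r ≤ cork D then G else 0 := by
          rw [← Finset.sum_filter, Finset.sum_const, Nat.card_eq_fintype_card,
            Fintype.card_subtype, smul_eq_mul]
      _ ≤ _ := by
          apply Finset.sum_le_sum
          intro D _
          split_ifs with h
          · have := count_indep D h
            rw [Nat.card_eq_fintype_card, Fintype.card_subtype, Finset.card_filter] at this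
            exact this
          · exact Nat.zero_le _
  have h2 : (∑ D : Matrix (Fin d) (Fin d) F, ∑ V : Matrix (Fin d) (Fin r) F,
      if P D V then 1 else 0) * Fintype.card F ^ (d * r) ≤
      Fintype.card F ^ (d * d) * Fintype.card F ^ (d * r) := by
    rw [Finset.sum_comm, Finset.sum_mul]
    calc _ ≤ ∑ V : Matrix (Fin d) (Fin r) F, Fintype.card F ^ (d * d) := by
          apply Finset.sum_le_sum
          intro V _
          by_cases hV : LinearIndependent F V.col
          · have := count_kill V hV
            rw [Nat.card_eq_fintype_card, Fintype.card_subtype, Finset.card_filter] at this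
            simpa [P, hV] using this
          · simp [P, hV]
      _ ≤ _ := by
          rw [Finset.sum_const, Finset.card_univ, smul_eq_mul, mul_comm]
          rw [card_mat]
  exact h1.trans (Nat.le_of_mul_le_mul_right h2 (by positivity))

lemma pz_bound {F : Type} [Field F] [Fintype F] {d : ℕ} (s n : ℕ)
    (A : Matrix (Fin d) (Fin d) F) (hA : cork A + s * n < d) :
    pz n A ≤ n * ((Nat.card {D : Matrix (Fin d) (Fin d) F // s + 1 ≤ cork D} : ℝ) /
      Fintype.card (Matrix (Fin d) (Fin d) F)) := by
  classical
  set N : ℝ := (Fintype.card (Matrix (Fin d) (Fin d) F) : ℝ) with hN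
  have hNpos : 0 < N := by rw [hN]; exact_mod_cast Fintype.card_pos
  set δ : ℝ := (Nat.card {D : Matrix (Fin d) (Fin d) F // s + 1 ≤ cork D} : ℝ) / N with hδ
  have hδ0 : 0 ≤ δ := by positivity
  induction n generalizing A with
  | zero =>
    have : A ≠ 0 := by
      rintro rfl
      have : (0 : Matrix (Fin d) (Fin d) F).mulVecLin = 0 := Matrix.mulVecLin_zero
      rw [cork, this, LinearMap.ker_zero, finrank_top] at hA
      simp at hA
    simp [pz, this]
  | succ n ih =>
    unfold pz
    rw [← hN, div_le_iff₀ hNpos]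
    have h1 : ∀ D : Matrix (Fin d) (Fin d) F,
        pz n (A * D) ≤ n * δ + (if s + 1 ≤ cork D then 1 else 0) := by
      intro D
      split_ifs with h
      · have := pz_le_one n (A * D)
        have : 0 ≤ n * δ := by positivity
        linarith
      · rw [add_zero]
        apply ih
        have := cork_mul A D
        rw [mul_add, mul_one] at hA
        omega
    refine (Finset.sum_le_sum fun D _ => h1 D).trans ?_
    rw [Finset.sum_add_distrib, Finset.sum_const, Finset.card_univ, nsmul_eq_mul, ← hN,
      ← Finset.sum_filter, Finset.sum_const, nsmul_eq_mul, mul_one]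
    have : ((Finset.univ.filter fun D : Matrix (Fin d) (Fin d) F => s + 1 ≤ cork D).card : ℝ)
        = δ * N := by
      rw [hδ, div_mul_cancel₀ _ hNpos.ne', Nat.card_eq_fintype_card, Fintype.card_subtype]
    rw [this]
    push_cast
    nlinarith

lemma nat_aux (q r : ℕ) (hq : 2 ≤ q) (hr : 1 ≤ r) (h : 3 ≤ q ^ r ^ 2) :
    q ^ r ^ 2 ≤ (q ^ (r * (r - 1)) * (q - 1) ^ r) ^ 2 := by
  obtain ⟨t, rfl⟩ : ∃ t, r = t + 1 := ⟨r - 1, by omega⟩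
  obtain ⟨u, rfl⟩ : ∃ u, q = u + 1 := ⟨q - 1, by omega⟩
  simp only [Nat.add_sub_cancel]
  by_cases ht : 1 ≤ t
  · calc (u + 1) ^ (t + 1) ^ 2 ≤ (u + 1) ^ ((t + 1) * t * 2) :=
          Nat.pow_le_pow_right (by omega) (by nlinarith)
      _ = ((u + 1) ^ ((t + 1) * t) * 1) ^ 2 := by rw [mul_one, pow_mul]
      _ ≤ _ := by
          gcongr
          exact Nat.one_le_pow _ _ (by omega)
  · obtain rfl : t = 0 := by omega
    norm_num at h ⊢
    nlinarith

lemma delta_bound {F : Type} [Field F] [Fintype F] {d r : ℕ} (hr : 1 ≤ r)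
    (h : 3 ≤ Fintype.card F ^ r ^ 2) :
    ((Nat.card {D : Matrix (Fin d) (Fin d) F // r ≤ cork D} : ℝ) /
      Fintype.card (Matrix (Fin d) (Fin d) F)) ^ 2 * (Fintype.card F : ℝ) ^ r ^ 2 ≤ 1 := by
  classical
  have hq : 2 ≤ Fintype.card F := Fintype.one_lt_card
  have h1 := count_bad (F := F) (d := d) (r := r)
  have h2 := nat_aux _ r hq hr h
  set G := Fintype.card F ^ (r * (r - 1)) * (Fintype.card F - 1) ^ r
  have hN : Fintype.card (Matrix (Fin d) (Fin d) F) = Fintype.card F ^ (d * d) := by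
    exact card_mat
  rw [hN]
  have hNp : (0 : ℝ) < ((Fintype.card F ^ (d * d) : ℕ) : ℝ) := by
    have : 0 < Fintype.card F := by omega
    positivity
  rw [div_pow, div_mul_eq_mul_div, div_le_one (by positivity)]
  have : (Nat.card {D : Matrix (Fin d) (Fin d) F // r ≤ cork D}) ^ 2 * Fintype.card F ^ r ^ 2 ≤
      (Fintype.card F ^ (d * d)) ^ 2 := by
    calc _ ≤ (Nat.card {D : Matrix (Fin d) (Fin d) F // r ≤ cork D}) ^ 2 * G ^ 2 := by gcongr
      _ = _ := (mul_pow _ _ _).symm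
      _ ≤ _ := by gcongr
  exact_mod_cast this

lemma disc_trivial {F : Type} [Field F] [Fintype F] {k : ℕ} {W : Type} [Fintype W] [Nonempty W]
    (T : (Fin k → W) → F) (S : Set (Fin k → W)) (y : F) :
    discVal k W F T S y ≤ 1 - 1 / (Fintype.card F : ℝ) := by
  classical
  have hq : (2 : ℝ) ≤ Fintype.card F := by exact_mod_cast (Fintype.one_lt_card : 1 < Fintype.card F)
  unfold discVal
  rw [Nat.card_eq_fintype_card (α := F)]
  set q : ℝ := (Fintype.card F : ℝ)
  have h1 : (Nat.card ↥(T ⁻¹' {y} ∩ S) : ℝ) ≤ Nat.card ↥S := by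
    exact_mod_cast Nat.card_mono (Set.toFinite S) Set.inter_subset_right
  have h2 : (Nat.card ↥S : ℝ) ≤ Nat.card (Fin k → W) := by
    exact_mod_cast Nat.card_le_card_of_injective (Subtype.val : S → _) Subtype.val_injective
  have h3 : (0 : ℝ) < Nat.card (Fin k → W) := by exact_mod_cast Nat.card_pos
  have h0 : (0 : ℝ) ≤ (Nat.card ↥(T ⁻¹' {y} ∩ S) : ℝ) := by positivity
  set s : ℝ := (Nat.card ↥S : ℝ)
  set t : ℝ := (Nat.card ↥(T ⁻¹' {y} ∩ S) : ℝ)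
  have hi : 1 / q ≤ 1 / 2 := one_div_le_one_div_of_le (by norm_num) hq
  have hi0 : 0 < 1 / q := by positivity
  rw [div_le_iff₀ h3, abs_le, div_eq_mul_one_div s q]
  constructor <;> nlinarith

lemma disc_fourier {F : Type} [Field F] [Fintype F] {k : ℕ} {W : Type} [Fintype W] [Nonempty W]
    (T : (Fin k → W) → F) (S : Set (Fin k → W)) (y : F) (ψ : AddChar F ℂ) (hψ : ψ.IsPrimitive)
    (g : (Fin k → W) → ℂ) (hg : ∀ B, (B ∈ S → g B = 1) ∧ (B ∉ S → g B = 0))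
    (β : ℝ) (hβ : 0 ≤ β)
    (h : ∀ a : F, a ≠ 0 → ‖∑ B, ψ (a * T B) * g B‖ ≤ β * Nat.card (Fin k → W)) :
    discVal k W F T S y ≤ β := by
  classical
  have hq : (0 : ℝ) < Fintype.card F := by exact_mod_cast Fintype.card_pos
  have hS : (Nat.card ↥S : ℂ) = ∑ B, g B := by
    rw [Nat.card_eq_fintype_card, Fintype.card_subtype, Finset.card_filter]
    push_cast
    refine Finset.sum_congr rfl fun B _ => ?_
    split_ifs with hB
    · rw [(hg B).1 hB]
    · rw [(hg B).2 hB]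
  have hT : (Nat.card ↥(T ⁻¹' {y} ∩ S) : ℂ) * Fintype.card F =
      ∑ B, (∑ a : F, ψ (a * (T B - y))) * g B := by
    rw [Nat.card_eq_fintype_card, Fintype.card_subtype, Finset.card_filter]
    push_cast
    rw [Finset.sum_mul]
    refine Finset.sum_congr rfl fun B _ => ?_
    rw [AddChar.sum_mulShift _ hψ]
    by_cases hB : B ∈ S
    · by_cases hy : T B = y
      · simp [hB, hy, (hg B).1 hB]
      · simp [hB, hy, (hg B).1 hB, sub_eq_zero]
    · simp [hB, (hg B).2 hB]
  have hdiff : (Nat.card ↥(T ⁻¹' {y} ∩ S) : ℂ) * Fintype.card F - Nat.card ↥S =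
      ∑ a ∈ Finset.univ.erase (0 : F), ψ (-(a * y)) * ∑ B, ψ (a * T B) * g B := by
    rw [hT, hS]
    simp only [Finset.sum_mul]
    rw [Finset.sum_comm, ← Finset.add_sum_erase _ _ (Finset.mem_univ (0 : F))]
    simp only [zero_mul, AddChar.map_zero_eq_one, one_mul, add_sub_cancel_left]
    refine Finset.sum_congr rfl fun a _ => ?_
    rw [Finset.mul_sum]
    refine Finset.sum_congr rfl fun B _ => ?_
    rw [mul_sub, sub_eq_add_neg, AddChar.map_add_eq_mul]
    ring
  have hn : ‖(Nat.card ↥(T ⁻¹' {y} ∩ S) : ℂ) * Fintype.card F - Nat.card ↥S‖ ≤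
      Fintype.card F * (β * Nat.card (Fin k → W)) := by
    rw [hdiff]
    refine (norm_sum_le _ _).trans ?_
    have h5 : ∀ a ∈ Finset.univ.erase (0 : F),
        ‖ψ (-(a * y)) * ∑ B, ψ (a * T B) * g B‖ ≤ β * Nat.card (Fin k → W) := by
      intro a ha
      rw [norm_mul, AddChar.norm_apply, one_mul]
      exact h a (Finset.ne_of_mem_erase ha)
    refine (Finset.sum_le_card_nsmul _ _ _ h5).trans ?_
    rw [nsmul_eq_mul]
    have : (Finset.univ.erase (0 : F)).card ≤ Fintype.card F := Finset.card_le_univ _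
    gcongr
  have hre : ‖(Nat.card ↥(T ⁻¹' {y} ∩ S) : ℂ) * Fintype.card F - Nat.card ↥S‖ =
      |(Nat.card ↥(T ⁻¹' {y} ∩ S) : ℝ) * Fintype.card F - Nat.card ↥S| := by
    rw [← Real.norm_eq_abs, ← Complex.norm_real]
    push_cast
    rfl
  rw [hre] at hn
  have h3 : (0 : ℝ) < Nat.card (Fin k → W) := by exact_mod_cast Nat.card_pos
  unfold discVal
  rw [div_le_iff₀ h3, Nat.card_eq_fintype_card (α := F)]
  have e : (Nat.card ↥(T ⁻¹' {y} ∩ S) : ℝ) - (Nat.card ↥S : ℝ) / Fintype.card F =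
      ((Nat.card ↥(T ⁻¹' {y} ∩ S) : ℝ) * Fintype.card F - Nat.card ↥S) / Fintype.card F := by
    field_simp
  rw [e, abs_div, abs_of_pos hq, div_le_iff₀ hq]
  linarith

lemma disc_bns {F : Type} [Field F] [Fintype F] {d n : ℕ} (s : ℕ) (hs : s * n < d)
    (S : Set (Fin (n + 1) → Matrix (Fin d) (Fin d) F))
    (hS : IsCylinderIntersection (n + 1) (Matrix (Fin d) (Fin d) F) S) (y : F) :
    discVal (n + 1) (Matrix (Fin d) (Fin d) F) F
      (fun B => Matrix.trace (List.ofFn B).prod) S y ≤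
    (n * ((Nat.card {D : Matrix (Fin d) (Fin d) F // s + 1 ≤ cork D} : ℝ) /
      Fintype.card (Matrix (Fin d) (Fin d) F))) ^ (((2 ^ n : ℕ) : ℝ)⁻¹) := by
  classical
  obtain ⟨Cs, hcyl, rfl⟩ := hS
  set p : ℝ := n * ((Nat.card {D : Matrix (Fin d) (Fin d) F // s + 1 ≤ cork D} : ℝ) /
      Fintype.card (Matrix (Fin d) (Fin d) F)) with hp
  have hp0 : 0 ≤ p := by positivity
  have hψ := AddChar.FiniteField.primitiveChar_to_Complex_isPrimitive F
  set ψ := AddChar.FiniteField.primitiveChar_to_Complex F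
  have hψ1 : ψ ≠ 1 := by
    have := hψ (one_ne_zero)
    rwa [AddChar.mulShift_one] at this
  let C : Fin (n + 1) → (Fin (n + 1) → Matrix (Fin d) (Fin d) F) → ℂ :=
    fun i B => if B ∈ Cs i then 1 else 0
  refine disc_fourier _ _ y ψ hψ (fun B => ∏ i, C i B) ?_ _ (by positivity) ?_
  · intro B
    constructor
    · intro hB
      rw [Set.mem_iInter] at hB
      exact Finset.prod_eq_one fun i _ => by simp [C, hB i]
    · intro hB
      rw [Set.mem_iInter] at hB
      push Not at hB
      obtain ⟨i, hi⟩ := hB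
      exact Finset.prod_eq_zero (Finset.mem_univ i) (by simp [C, hi])
  · intro a ha
    have h1 := bns ψ hψ1 n (a • (1 : Matrix (Fin d) (Fin d) F)) C
      (by intro i B; simp only [C]; split_ifs <;> simp)
      (by
        intro i B B' hB
        simp only [C, hcyl i B B' hB])
    have hc : cork (a • (1 : Matrix (Fin d) (Fin d) F)) = 0 := by
      unfold cork
      rw [Submodule.finrank_eq_zero, LinearMap.ker_eq_bot']
      intro v hv
      simpa [Matrix.smul_mulVec, ha] using hv
    have h2 := pz_bound s n (a • (1 : Matrix (Fin d) (Fin d) F)) (by rw [hc]; simpa using hs)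
    rw [← hp] at h2
    simp only [Matrix.smul_mul, Matrix.one_mul, Matrix.trace_smul, smul_eq_mul] at h1
    have hN : (Nat.card (Fin (n + 1) → Matrix (Fin d) (Fin d) F) : ℝ) =
        (Fintype.card (Matrix (Fin d) (Fin d) F) : ℝ) ^ (n + 1) := by
      rw [Nat.card_eq_fintype_card, Fintype.card_fun, Fintype.card_fin, Nat.cast_pow]
    rw [hN]
    rw [← pow_le_pow_iff_left₀ (norm_nonneg _) (by positivity) (n := 2 ^ n) (by positivity)]
    rw [mul_pow, Real.rpow_inv_natCast_pow hp0 (by positivity)]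
    refine h1.trans ?_
    rw [mul_comm p]
    gcongr

lemma pow_five (k : ℕ) : k ^ 5 ≤ 3125 * 2 ^ k := by
  by_cases hk : k ≤ 7
  · interval_cases k <;> norm_num
  · push Not at hk
    induction k, (show 8 ≤ k from hk) using Nat.le_induction with
    | base => norm_num
    | succ m hm ih =>
      by_cases h8 : m = 7
      · omega
      have := ih (by omega)
      have h2 : (m + 1) ^ 5 ≤ 2 * m ^ 5 := by
        obtain ⟨t, rfl⟩ : ∃ t, m = t + 8 := ⟨m - 8, by omega⟩
        ring_nf
        nlinarith [Nat.zero_le (t ^ 5), Nat.zero_le (t ^ 4), Nat.zero_le (t ^ 3),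
          Nat.zero_le (t ^ 2)]
      rw [pow_succ 2 m]
      omega

lemma singleton_cyl {k : ℕ} (hk : 2 ≤ k) {W : Type} (x : Fin k → W) :
    IsCylinderIntersection k W {x} := by
  refine ⟨fun i => {z | ∀ j, j ≠ i → z j = x j}, ?_, ?_⟩
  · intro i a b hab
    simp only [Set.mem_ofPred_eq]
    exact forall_congr' fun j => forall_congr' fun hj => by rw [hab j hj]
  · ext z
    simp only [Set.mem_singleton_iff, Set.mem_iInter, Set.mem_ofPred_eq]
    constructor
    · rintro rfl _ _ _
      rfl
    · intro h
      funext j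
      by_cases hj : (j : ℕ) = 0
      · exact h ⟨1, by omega⟩ j (by intro h; rw [h] at hj; simp at hj)
      · exact h ⟨0, by omega⟩ j (by intro h; rw [h] at hj; simp at hj)

lemma disc_singleton_pos {F : Type} [Field F] [Fintype F] {k : ℕ} {W : Type} [Fintype W]
    [Nonempty W] (T : (Fin k → W) → F) (x : Fin k → W) :
    0 < discVal k W F T {x} (T x) := by
  classical
  have hq : (2 : ℝ) ≤ Fintype.card F := by exact_mod_cast (Fintype.one_lt_card : 1 < Fintype.card F)
  have h3 : (0 : ℝ) < Nat.card (Fin k → W) := by exact_mod_cast Nat.card_pos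
  unfold discVal
  have e : T ⁻¹' {T x} ∩ {x} = {x} := by
    ext z; simp only [Set.mem_inter_iff, Set.mem_preimage, Set.mem_singleton_iff]
    constructor
    · exact fun h => h.2
    · rintro rfl; exact ⟨rfl, rfl⟩
  rw [e, Nat.card_eq_fintype_card (α := F)]
  apply div_pos _ h3
  rw [abs_pos]
  simp only [Nat.card_unique, Nat.cast_one]
  have : (1 : ℝ) / Fintype.card F ≤ 1 / 2 := one_div_le_one_div_of_le (by norm_num) hq
  linarith

/-- There is a constant `c₀ > 0` such that for every finite field
`F` (i.e. every prime power `q = |F|`) and all integers `d ≥ 1`, `k ≥ 2`, the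
multicolor discrepancy of the trace function
`T(B₁, …, B_k) = Tr(B₁ ⬝ B₂ ⬝ ⋯ ⬝ B_k)` on `d × d` matrices over `F` satisfies
`-log₂ disc_k(T) ≥ c₀ · d² · log₂ q / (k² · 2^k)`. -/
theorem trace_function_discrepancy :
    ∃ c₀ : ℝ, 0 < c₀ ∧
      ∀ (F : Type) [Field F] [Fintype F] (d k : ℕ), 1 ≤ d → 2 ≤ k →
        -Real.logb 2 (multiDisc k (Matrix (Fin d) (Fin d) F) F
            (fun B => Matrix.trace (List.ofFn B).prod)) ≥
          c₀ * (d : ℝ) ^ 2 * Real.logb 2 (Fintype.card F) /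
            ((k : ℝ) ^ 2 * 2 ^ k) := by
  refine ⟨1 / 12500, by norm_num, ?_⟩
  intro F _ _ d k hd hk
  classical
  obtain ⟨n, rfl⟩ : ∃ n, k = n + 1 := ⟨k - 1, by omega⟩
  have hn : 1 ≤ n := by omega
  set X := multiDisc (n + 1) (Matrix (Fin d) (Fin d) F) F
            (fun B => Matrix.trace (List.ofFn B).prod) with hX
  set E := { x : ℝ | ∃ S y, IsCylinderIntersection (n + 1) (Matrix (Fin d) (Fin d) F) S ∧
    x = discVal (n + 1) (Matrix (Fin d) (Fin d) F) F
      (fun B => Matrix.trace (List.ofFn B).prod) S y } with hE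
  have hXE : X = sSup E := rfl
  have hx0 := singleton_cyl hk (fun _ : Fin (n + 1) => (0 : Matrix (Fin d) (Fin d) F))
  have hbdd : BddAbove E := by
    refine ⟨1 - 1 / (Fintype.card F : ℝ), ?_⟩
    rintro _ ⟨S, y, _, rfl⟩
    exact disc_trivial _ _ _
  have hne : E.Nonempty := ⟨_, _, 0, hx0, rfl⟩
  have hXpos : 0 < X := by
    rw [hXE]
    exact lt_of_lt_of_le (disc_singleton_pos _ _) (le_csSup hbdd ⟨_, _, hx0, rfl⟩)
  have hX1 : X ≤ 1 - 1 / (Fintype.card F : ℝ) := by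
    rw [hXE]
    apply csSup_le hne
    rintro _ ⟨S, y, _, rfl⟩
    exact disc_trivial _ _ _
  set s := (d - 1) / n with hs
  have hsn : s * n < d := by
    have := Nat.div_mul_le_self (d - 1) n
    rw [← hs] at this
    omega
  have hdr : d ≤ (s + 1) * n := by
    have := Nat.lt_div_mul_add (a := d - 1) (b := n) (by omega)
    rw [← hs] at this
    rw [add_mul, one_mul]
    omega
  set δ : ℝ := ((Nat.card {D : Matrix (Fin d) (Fin d) F // s + 1 ≤ cork D} : ℝ) /
      Fintype.card (Matrix (Fin d) (Fin d) F)) with hδ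
  have hδ0 : 0 ≤ δ := by positivity
  have hX2 : X ^ 2 ^ n ≤ n * δ := by
    have : X ≤ (n * δ) ^ (((2 ^ n : ℕ) : ℝ)⁻¹) := by
      rw [hXE]
      apply csSup_le hne
      rintro _ ⟨S, y, hS, rfl⟩
      exact disc_bns s hsn S hS y
    calc X ^ 2 ^ n ≤ ((n * δ) ^ (((2 ^ n : ℕ) : ℝ)⁻¹)) ^ 2 ^ n := by gcongr
      _ = _ := Real.rpow_inv_natCast_pow (by positivity) (by positivity)
  clear_value X E
  have hq2 : 2 ≤ Fintype.card F := Fintype.one_lt_card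
  have hDb := delta_bound (F := F) (d := d) (r := s + 1) (Nat.le_add_left 1 s)
  rw [← hδ] at hDb
  clear_value δ
  set q := Fintype.card F
  set r := s + 1 with hr
  have hq2R : (2 : ℝ) ≤ q := by exact_mod_cast hq2
  have hlq : 0 < Real.log q := Real.log_pos (by linarith)
  have hl2 : 0 < Real.log 2 := Real.log_pos (by norm_num)
  -- reduce to natural logs
  have hdk : (d : ℝ) ^ 2 ≤ (r : ℝ) ^ 2 * ((n + 1 : ℕ) : ℝ) ^ 2 := by
    rw [← mul_pow]
    have : (d : ℝ) ≤ r * ((n + 1 : ℕ) : ℝ) := by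
      have : d ≤ r * (n + 1) := hdr.trans (Nat.mul_le_mul_left _ (Nat.le_succ n))
      exact_mod_cast this
    gcongr
  suffices hmain : 1 / 12500 * (r : ℝ) ^ 2 * Real.log q / 2 ^ (n + 1) ≤ -Real.log X by
    have e : 1 / 12500 * (d : ℝ) ^ 2 * Real.logb 2 q / (((n + 1 : ℕ) : ℝ) ^ 2 * 2 ^ (n + 1)) ≤
        1 / 12500 * (r : ℝ) ^ 2 * Real.logb 2 q / 2 ^ (n + 1) := by
      rw [div_le_div_iff₀ (by positivity) (by positivity)]
      have hb : 0 ≤ Real.logb 2 q := div_nonneg hlq.le hl2.le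
      have := mul_le_mul_of_nonneg_right hdk
        (show 0 ≤ 1 / 12500 * Real.logb 2 q * 2 ^ (n + 1) by positivity)
      linarith
    refine ge_iff_le.2 (e.trans ?_)
    unfold Real.logb
    calc _ = (1 / 12500 * (r : ℝ) ^ 2 * Real.log q / 2 ^ (n + 1)) / Real.log 2 := by ring
      _ ≤ (-Real.log X) / Real.log 2 := by gcongr
      _ = _ := by ring
  by_cases hcase : (n + 1) ^ 4 ≤ q ^ r ^ 2
  · -- the main case
    have h16 : 3 ≤ q ^ r ^ 2 := by
      have : 2 ^ 4 ≤ (n + 1) ^ 4 := Nat.pow_le_pow_left hk 4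
      omega
    have h1 := hDb h16
    have hcR : ((n : ℝ)) ^ 4 ≤ (q : ℝ) ^ r ^ 2 := by
      have : n ^ 4 ≤ q ^ r ^ 2 := (Nat.pow_le_pow_left (by omega) 4).trans hcase
      exact_mod_cast this
    set Q : ℝ := (q : ℝ) ^ r ^ 2 with hQ
    have hQpos : 0 < Q := by positivity
    have h2 : (X ^ 2 ^ n) ^ 4 * Q ≤ 1 := by
      calc (X ^ 2 ^ n) ^ 4 * Q ≤ (n * δ) ^ 4 * Q := by gcongr
        _ = (n : ℝ) ^ 4 * (δ ^ 4 * Q) := by ring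
        _ ≤ Q * (δ ^ 4 * Q) := by gcongr
        _ = (δ ^ 2 * Q) ^ 2 := by ring
        _ ≤ 1 := pow_le_one₀ (by positivity) h1
    have h3 := Real.log_le_log (by positivity) h2
    rw [Real.log_one, Real.log_mul (by positivity) (by positivity), Real.log_pow, Real.log_pow,
      hQ, Real.log_pow] at h3
    push_cast at h3
    have hP : (0 : ℝ) < 2 ^ n := by positivity
    rw [div_le_iff₀ (by positivity), pow_succ (2 : ℝ) n]
    have : 0 ≤ (r : ℝ) ^ 2 * Real.log q := by positivity
    nlinarith
  · push Not at hcase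
    have hqk : (q : ℝ) ≤ ((n + 1 : ℕ) : ℝ) ^ 4 := by
      have : q ≤ q ^ r ^ 2 := Nat.le_self_pow (by positivity) q
      exact_mod_cast this.trans hcase.le
    have hlog : (r : ℝ) ^ 2 * Real.log q ≤ 4 * ((n + 1 : ℕ) : ℝ) := by
      have h1 : (q : ℝ) ^ r ^ 2 ≤ ((n + 1 : ℕ) : ℝ) ^ 4 := by exact_mod_cast hcase.le
      have h2 := Real.log_le_log (by positivity) h1
      rw [Real.log_pow, Real.log_pow] at h2
      have h3 := Real.log_le_self (x := ((n + 1 : ℕ) : ℝ)) (by positivity)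
      push_cast at h2 h3 ⊢
      linarith
    have hX3 : 1 / (q : ℝ) ≤ -Real.log X := by
      have := Real.log_le_sub_one_of_pos hXpos
      linarith
    have h5 : ((n + 1 : ℕ) : ℝ) ^ 5 ≤ 3125 * 2 ^ (n + 1) := by exact_mod_cast pow_five (n + 1)
    refine le_trans ?_ hX3
    set K : ℝ := ((n + 1 : ℕ) : ℝ) with hK
    have hKpos : 0 < K := by rw [hK]; positivity
    refine le_trans ?_ (one_div_le_one_div_of_le (by positivity) hqk)
    rw [div_le_div_iff₀ (by positivity) (by positivity)]
    have h6 : (r : ℝ) ^ 2 * Real.log q * K ^ 4 ≤ 4 * K * K ^ 4 := by gcongr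
    nlinarith
end

section
/- There exists a constant c > 0 such that the following holds for every prime power N ≥ 2 and every integer k ≥ 2: setting d = ⌈c · k^{3/2} · 2^{k/2} · √(N / log₂ N)⌉, A = T_{N,d,k} : M_d^{k−1} → F_N ≅ [N], and f = Lift(A), one has D_k(f) ≥ log₂ N. -/
section XHelpers
open Finset BigOperators

section XA

lemma X_norm_expect_le {ι : Type*} [Fintype ι] (f : ι → ℂ) : ‖𝔼 i, f i‖ ≤ 𝔼 i, ‖f i‖ := by
  rw [Fintype.expect_eq_sum_div_card, Fintype.expect_eq_sum_div_card, norm_div]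
  simp only [RCLike.norm_natCast]
  gcongr
  exact norm_sum_le _ _

lemma X_expect_pow_le {ι : Type*} [Fintype ι] [Nonempty ι] (f : ι → ℝ) (hf : ∀ i, 0 ≤ f i) (n : ℕ) :
    (𝔼 i, f i) ^ n ≤ 𝔼 i, f i ^ n := by
  rw [Fintype.expect_eq_sum_div_card, Fintype.expect_eq_sum_div_card]
  have := Real.pow_arith_mean_le_arith_mean_pow univ (fun _ : ι => (Fintype.card ι : ℝ)⁻¹) f
    (fun _ _ => by positivity) (by simp) (fun i _ => hf i) n
  rw [← mul_sum, ← mul_sum] at this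
  rw [div_eq_inv_mul, div_eq_inv_mul]
  exact this

lemma X_cs {U V : Type*} [Fintype U] [Fintype V] [Nonempty V] [Nonempty U] (g : U → V → ℂ) (h : V → ℂ)
    (hh : ∀ v, ‖h v‖ ≤ 1) :
    ‖𝔼 u, 𝔼 v, h v * g u v‖ ^ 2 ≤ 𝔼 u, 𝔼 u', ‖𝔼 v, g u v * (starRingEnd ℂ) (g u' v)‖ := by
  have e1 : 𝔼 u, 𝔼 v, h v * g u v = 𝔼 v, h v * 𝔼 u, g u v := by
    rw [expect_comm]
    simp only [mul_expect]
  have s1 : ‖𝔼 u, 𝔼 v, h v * g u v‖ ≤ 𝔼 v, ‖𝔼 u, g u v‖ := by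
    rw [e1]
    refine (X_norm_expect_le _).trans (expect_le_expect fun v _ => ?_)
    rw [norm_mul]
    exact mul_le_of_le_one_left (norm_nonneg _) (hh v)
  have s2 : ‖𝔼 u, 𝔼 v, h v * g u v‖ ^ 2 ≤ 𝔼 v, ‖𝔼 u, g u v‖ ^ 2 :=
    (pow_le_pow_left₀ (norm_nonneg _) s1 2).trans (X_expect_pow_le _ (fun _ => norm_nonneg _) 2)
  have s3 : ((𝔼 v, ‖𝔼 u, g u v‖ ^ 2 : ℝ) : ℂ) = 𝔼 u, 𝔼 u', 𝔼 v, g u v * (starRingEnd ℂ) (g u' v) := by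
    have h0 : ∀ v, ((‖𝔼 u, g u v‖ ^ 2 : ℝ) : ℂ) = 𝔼 u, 𝔼 u', g u v * (starRingEnd ℂ) (g u' v) := by
      intro v
      rw [← Complex.normSq_eq_norm_sq, ← Complex.mul_conj, Fintype.expect_eq_sum_div_card]
      simp only [map_div₀, map_sum, Complex.conj_natCast]
      rw [← Fintype.expect_eq_sum_div_card, ← Fintype.expect_eq_sum_div_card, expect_mul_expect]
    have h1 : ((𝔼 v, ‖𝔼 u, g u v‖ ^ 2 : ℝ) : ℂ) = 𝔼 v, ((‖𝔼 u, g u v‖ ^ 2 : ℝ) : ℂ) := by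
      rw [Fintype.expect_eq_sum_div_card, Fintype.expect_eq_sum_div_card]
      push_cast
      rfl
    rw [h1]
    simp only [h0]
    rw [expect_comm]
    refine expect_congr rfl fun u _ => ?_
    rw [expect_comm]
  have s4 : (𝔼 v, ‖𝔼 u, g u v‖ ^ 2 : ℝ) = ‖𝔼 u, 𝔼 u', 𝔼 v, g u v * (starRingEnd ℂ) (g u' v)‖ := by
    rw [← s3, Complex.norm_real, Real.norm_of_nonneg]
    exact expect_nonneg fun _ _ => by positivity
  refine s2.trans (s4.trans_le ?_)
  refine (X_norm_expect_le _).trans (expect_le_expect fun v _ => X_norm_expect_le _)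

variable {F : Type} [Field F] [Fintype F] [DecidableEq F] {d : ℕ}

noncomputable def Zp {F : Type} [Field F] [Fintype F] [DecidableEq F] {d : ℕ} : ℕ → Matrix (Fin d) (Fin d) F → ℝ
  | 0, L => if L = 0 then 1 else 0
  | n + 1, L => 𝔼 u, Zp n (L * u)

lemma X_expect_cons {W : Type*} [Fintype W] {M : Type*} [AddCommMonoid M] [Module ℚ≥0 M] (n : ℕ) (f : (Fin (n+1) → W) → M) :
    𝔼 x, f x = 𝔼 u, 𝔼 v : Fin n → W, f (Fin.cons u v) := by
  rw [← expect_product', univ_product_univ]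
  exact (Fintype.expect_equiv (Fin.consEquiv (fun _ => W)) _ _ (fun _ => rfl)).symm

lemma X_base (ψ : AddChar F ℂ) (hψ : ψ ≠ 0) (L : Matrix (Fin d) (Fin d) F) :
    𝔼 z, ψ (Matrix.trace (L * z)) = if L = 0 then 1 else 0 := by
  let χ : AddChar (Matrix (Fin d) (Fin d) F) ℂ :=
    ψ.compAddMonoidHom ((Matrix.traceAddMonoidHom (Fin d) F).comp (AddMonoidHom.mulLeft L))
  have h := AddChar.expect_eq_ite χ
  have h2 : χ = 0 ↔ L = 0 := by
    constructor
    · intro hχ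
      by_contra hL
      apply hψ
      have : ∃ i j, L i j ≠ 0 := by
        by_contra hc
        push Not at hc
        exact hL (by ext i j; exact hc i j)
      obtain ⟨i, j, hij⟩ := this
      ext a
      have := congrArg (fun f : AddChar (Matrix (Fin d) (Fin d) F) ℂ => f (Matrix.single j i (a / L i j))) hχ
      have h3 : L i j * (a / L i j) = a := by field_simp
      have h4 : ψ (L i j * (a / L i j)) = 1 := by
        simpa [χ, Matrix.trace_mul_single, div_eq_mul_inv] using this
      rw [h3] at h4
      simpa using h4
    · rintro rfl
      ext z
      simp [χ]
  simp only [h2] at h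
  rw [← h]
  rfl

theorem X_cyl_bound (ψ : AddChar F ℂ) (hψ : ψ ≠ 0) : ∀ (n : ℕ) (L : Matrix (Fin d) (Fin d) F)
    (φ : Fin (n+1) → (Fin (n+1) → Matrix (Fin d) (Fin d) F) → ℂ),
    (∀ i x, ‖φ i x‖ ≤ 1) → (∀ i x w, φ i (Function.update x i w) = φ i x) →
    ‖𝔼 x, ψ (Matrix.trace (L * (List.ofFn x).prod)) * ∏ i, φ i x‖ ^ (2 ^ n) ≤ Zp n L
  | 0, L, φ, h1, h2 => by
    rw [X_expect_cons]
    have h3 : ∀ u v, φ 0 (Fin.cons u v) = φ 0 0 := by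
      intro u v
      rw [← h2 0 0 u]
      congr 1
      ext i
      fin_cases i
      simp
    have e : (𝔼 u : Matrix (Fin d) (Fin d) F, 𝔼 v : Fin 0 → Matrix (Fin d) (Fin d) F,
        ψ (Matrix.trace (L * (List.ofFn (Fin.cons u v : Fin 1 → _)).prod)) * ∏ i, φ i (Fin.cons u v))
        = (if L = 0 then 1 else 0) * φ 0 0 := by
      rw [← X_base ψ hψ L, expect_mul]
      refine expect_congr rfl fun u _ => ?_
      rw [← Fintype.expect_const (ι := Fin 0 → Matrix (Fin d) (Fin d) F)
        (ψ (L * u).trace * φ 0 0)]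
      refine expect_congr rfl fun v _ => ?_
      simp [h3]
    rw [e]
    simp only [Zp, pow_zero, pow_one, norm_mul]
    split_ifs
    · simpa using h1 0 0
    · simp
  | n + 1, L, φ, h1, h2 => by
    rw [X_expect_cons]
    have e : ∀ (u) (v : Fin (n+1) → Matrix (Fin d) (Fin d) F),
        ψ (Matrix.trace (L * (List.ofFn (Fin.cons u v : Fin (n+1+1) → _)).prod)) *
          ∏ i, φ i (Fin.cons u v) =
        φ 0 (Fin.cons 0 v) * (ψ (Matrix.trace (L * u * (List.ofFn v).prod)) *
          ∏ i : Fin (n+1), φ i.succ (Fin.cons u v)) := by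
      intro u v
      have : φ 0 (Fin.cons u v) = φ 0 (Fin.cons 0 v) := by
        rw [← h2 0 (Fin.cons 0 v) u, Fin.update_cons_zero]
      rw [Fin.prod_univ_succ, this, List.ofFn_succ]
      simp only [Fin.cons_zero, Fin.cons_succ, List.prod_cons, mul_assoc]
      ring
    simp only [e]
    have cs := X_cs (fun u (v : Fin (n+1) → Matrix (Fin d) (Fin d) F) => 
      ψ (Matrix.trace (L * u * (List.ofFn v).prod)) * ∏ i : Fin (n+1), φ i.succ (Fin.cons u v))
      (fun v => φ 0 (Fin.cons 0 v)) (fun v => h1 _ _)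
    rw [pow_succ', pow_mul]
    refine (pow_le_pow_left₀ (by positivity) cs _).trans ?_
    refine (X_expect_pow_le _ (fun _ => expect_nonneg fun _ _ => norm_nonneg _) _).trans ?_
    have key : ∀ u u', ‖𝔼 v : Fin (n+1) → Matrix (Fin d) (Fin d) F, 
        (ψ (Matrix.trace (L * u * (List.ofFn v).prod)) * ∏ i : Fin (n+1), φ i.succ (Fin.cons u v)) *
        (starRingEnd ℂ) (ψ (Matrix.trace (L * u' * (List.ofFn v).prod)) * ∏ i : Fin (n+1), φ i.succ (Fin.cons u' v))‖
        ^ (2 ^ n) ≤ Zp n (L * (u - u')) := by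
      intro u u'
      have ih := X_cyl_bound ψ hψ n (L * (u - u')) 
        (fun i v => φ i.succ (Fin.cons u v) * (starRingEnd ℂ) (φ i.succ (Fin.cons u' v)))
        (fun i v => by
          rw [norm_mul, RCLike.norm_conj]
          exact mul_le_one₀ (h1 _ _) (norm_nonneg _) (h1 _ _))
        (fun i v w => by
          simp only [Fin.cons_update, h2])
      convert ih using 4 with v
      rw [prod_mul_distrib, map_mul, map_prod, ← AddChar.map_neg_eq_conj, mul_sub, sub_mul,
        Matrix.trace_sub, sub_eq_add_neg, AddChar.map_add_eq_mul]
      ring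
    calc _ ≤ 𝔼 u : Matrix (Fin d) (Fin d) F, 𝔼 u', Zp n (L * (u - u')) := by
          refine expect_le_expect fun u _ => ?_
          refine (X_expect_pow_le _ (fun _ => norm_nonneg _) _).trans ?_
          exact expect_le_expect fun u' _ => key u u'
      _ = 𝔼 u : Matrix (Fin d) (Fin d) F, Zp (n+1) L := by
          refine expect_congr rfl fun u _ => ?_
          rw [Zp]
          exact Fintype.expect_equiv (Equiv.subLeft u) _ _ (fun _ => rfl)
      _ = _ := Fintype.expect_const _

end XA


lemma X_sylvester {F : Type} [Field F] {d : ℕ} (L u : Matrix (Fin d) (Fin d) F) :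
    L.rank + u.rank ≤ (L * u).rank + d := by
  have h1 : (L * u).rank + Module.finrank F (LinearMap.ker (L * u).mulVecLin) = d := by
    simpa [Matrix.rank] using LinearMap.finrank_range_add_finrank_ker (L * u).mulVecLin
  have h2 : L.rank + Module.finrank F (LinearMap.ker L.mulVecLin) = d := by
    simpa [Matrix.rank] using LinearMap.finrank_range_add_finrank_ker L.mulVecLin
  have h3 : u.rank + Module.finrank F (LinearMap.ker u.mulVecLin) = d := by
    simpa [Matrix.rank] using LinearMap.finrank_range_add_finrank_ker u.mulVecLin
  have h4 : Module.finrank F (LinearMap.ker (L * u).mulVecLin) ≤ 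
      Module.finrank F (LinearMap.ker L.mulVecLin) + Module.finrank F (LinearMap.ker u.mulVecLin) := by
    set K := LinearMap.ker (L * u).mulVecLin
    have hm : ∀ x : K, (u.mulVecLin.domRestrict K) x ∈ LinearMap.ker L.mulVecLin := by
      intro x
      have := x.2
      simp only [K, LinearMap.mem_ker, Matrix.mulVecLin_mul, LinearMap.comp_apply] at this
      simpa using this
    let g : K →ₗ[F] LinearMap.ker L.mulVecLin := (u.mulVecLin.domRestrict K).codRestrict _ hm
    have a := LinearMap.finrank_range_add_finrank_ker g
    have b : Module.finrank F (LinearMap.range g) ≤ _ := Submodule.finrank_le _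
    have c : Module.finrank F (LinearMap.ker g) ≤ Module.finrank F (LinearMap.ker u.mulVecLin) := by
      have hk : ∀ x : LinearMap.ker g, (K.subtype.comp (LinearMap.ker g).subtype) x ∈ LinearMap.ker u.mulVecLin := by
        intro x
        have := x.2
        simp only [g, LinearMap.mem_ker] at this
        exact congrArg Subtype.val this
      refine LinearMap.finrank_le_finrank_of_injective (f := (K.subtype.comp (LinearMap.ker g).subtype).codRestrict _ hk) ?_
      intro x y hxy
      have := congrArg Subtype.val hxy
      exact Subtype.ext (Subtype.ext this)
    omega
  omega

lemma X_count_kill {F : Type} [Field F] [Fintype F] [DecidableEq F] {d s : ℕ} 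
    (v : Fin s → Fin d → F) (hv : LinearIndependent F v) :
    Nat.card {B : Matrix (Fin d) (Fin d) F // ∀ j, B.mulVec (v j) = 0} * Fintype.card F ^ (d * s)
      = Fintype.card F ^ (d * d) := by
  let T : Matrix (Fin d) (Fin d) F →ₗ[F] (Fin s → Fin d → F) :=
    { toFun := fun B j => B.mulVec (v j)
      map_add' := fun A B => by ext; simp [Matrix.add_mulVec]
      map_smul' := fun a B => by ext; simp [Matrix.smul_mulVec] }
  have hT : Function.Surjective T := by
    intro w
    obtain ⟨g, hg⟩ := LinearMap.exists_leftInverse_of_injective _ (LinearMap.ker_eq_bot.2 hv)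
    refine ⟨LinearMap.toMatrix' ((Finsupp.linearCombination F w).comp g), ?_⟩
    ext1 j
    have hj : g (v j) = Finsupp.single j 1 := by
      have := LinearMap.congr_fun hg (Finsupp.single j 1)
      simpa using this
    simp [T, LinearMap.toMatrix'_mulVec, hj]
  have h1 := LinearMap.finrank_range_add_finrank_ker T
  rw [LinearMap.range_eq_top.2 hT, finrank_top] at h1
  have h2 : Nat.card {B : Matrix (Fin d) (Fin d) F // ∀ j, B.mulVec (v j) = 0} = 
      Nat.card (LinearMap.ker T) := by
    refine Nat.card_congr (Equiv.subtypeEquivRight fun B => ?_)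
    simp only [LinearMap.mem_ker]
    exact (funext_iff (f := T B) (g := 0)).symm
  rw [h2, Module.natCard_eq_pow_finrank (K := F), Nat.card_eq_fintype_card, ← pow_add]
  congr 1
  simp [Module.finrank_matrix, Module.finrank_pi_fintype] at h1
  rw [← h1]
  ring

lemma X_bad_count {F : Type} [Field F] [Fintype F] [DecidableEq F] {d s : ℕ} :
    #{B : Matrix (Fin d) (Fin d) F | B.rank + s ≤ d} * Fintype.card F ^ (s * (s - 1))
      ≤ Fintype.card F ^ (d * d) := by
  classical
  have hq : 2 ≤ Fintype.card F := Fintype.one_lt_card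
  by_cases hs : s ≤ d
  swap
  · have : ({B : Matrix (Fin d) (Fin d) F | B.rank + s ≤ d} : Finset _) = ∅ := by
      ext B
      simp
      omega
    rw [this]
    simp
  set q := Fintype.card F with hqd
  have main := Finset.card_mul_le_card_mul 
    (s := ({B : Matrix (Fin d) (Fin d) F | B.rank + s ≤ d} : Finset _))
    (t := ({v : Fin s → Fin d → F | LinearIndependent F v} : Finset _))
    (fun B v => ∀ j, B.mulVec (v j) = 0) (m := q ^ (s * (s - 1))) (n := q ^ (d * d - d * s))
    (by
      intro B hB
      simp only [mem_filter, mem_univ, true_and] at hB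
      have h3 : B.rank + Module.finrank F (LinearMap.ker B.mulVecLin) = d := by
        simpa [Matrix.rank] using LinearMap.finrank_range_add_finrank_ker B.mulVecLin
      have h4 : s ≤ Module.finrank F (LinearMap.ker B.mulVecLin) := by omega
      have h5 := card_linearIndependent (K := F) (V := LinearMap.ker B.mulVecLin) h4
      have h6 : q ^ (s * (s - 1)) ≤ ∏ i : Fin s, (q ^ Module.finrank F (LinearMap.ker B.mulVecLin) - q ^ i.val) := by
        have : q ^ (s * (s - 1)) = ∏ i : Fin s, q ^ (s - 1) := by
          simp [← pow_mul, mul_comm]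
        rw [this]
        refine Finset.prod_le_prod' fun i _ => ?_
        have a1 : q ^ i.val ≤ q ^ (s - 1) := Nat.pow_le_pow_right (by omega) (by have := i.2; omega)
        have a2 : q ^ s ≤ q ^ Module.finrank F (LinearMap.ker B.mulVecLin) :=
          Nat.pow_le_pow_right (by omega) h4
        have a3 : 2 * q ^ (s - 1) ≤ q ^ s := by
          obtain ⟨t, rfl⟩ : ∃ t, s = t + 1 := ⟨s - 1, by have := i.2; omega⟩
          rw [pow_succ', Nat.add_sub_cancel]
          exact Nat.mul_le_mul_right _ hq
        omega
      rw [← h5] at h6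
      refine h6.trans ?_
      have : Fintype {v : Fin s → LinearMap.ker B.mulVecLin // LinearIndependent F v} :=
        Fintype.ofFinite _
      rw [Nat.card_eq_fintype_card, ← Finset.card_univ]
      refine Finset.card_le_card_of_injOn (fun v j => ((v.1 j : LinearMap.ker B.mulVecLin) : Fin d → F)) ?_ ?_
      · intro v _
        simp only [Finset.bipartiteAbove, coe_filter, mem_filter, mem_univ, true_and, Set.mem_ofPred_eq]
        refine ⟨v.2.map' (LinearMap.ker B.mulVecLin).subtype (Submodule.ker_subtype _), fun j => ?_⟩
        exact LinearMap.mem_ker.1 (v.1 j).2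
      · intro v _ w _ h
        refine Subtype.ext (funext fun j => Subtype.ext ?_)
        exact congrFun h j)
    (by
      intro v hv
      simp only [mem_filter, mem_univ, true_and] at hv
      have h := X_count_kill v hv
      rw [Nat.card_eq_fintype_card, Fintype.card_subtype] at h
      have h2 : #(bipartiteBelow (fun (B : Matrix (Fin d) (Fin d) F) (v : Fin s → Fin d → F) => ∀ j, B.mulVec (v j) = 0)
        ({B : Matrix (Fin d) (Fin d) F | B.rank + s ≤ d} : Finset _) v) ≤
          #{B : Matrix (Fin d) (Fin d) F | ∀ j, B.mulVec (v j) = 0} := by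
        refine Finset.card_le_card ?_
        intro B
        simp only [Finset.bipartiteBelow, mem_filter, mem_univ, true_and]
        exact fun h => h.2
      refine h2.trans (Nat.le_of_eq ?_)
      refine Nat.eq_of_mul_eq_mul_right (show 0 < q ^ (d * s) by positivity) ?_
      rw [h, ← pow_add, Nat.sub_add_cancel (Nat.mul_le_mul_left _ hs)])
  refine main.trans ?_
  have h7 : #({v : Fin s → Fin d → F | LinearIndependent F v} : Finset _) ≤ q ^ (d * s) := by
    refine (Finset.card_le_univ _).trans ?_
    simp [hqd, ← pow_mul]
  calc _ ≤ q ^ (d * s) * q ^ (d * d - d * s) := Nat.mul_le_mul_right _ h7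
    _ = _ := by rw [← pow_add, Nat.add_sub_cancel' (Nat.mul_le_mul_left _ hs)]

lemma X_bad_prob {F : Type} [Field F] [Fintype F] [DecidableEq F] {d s : ℕ} :
    (𝔼 B : Matrix (Fin d) (Fin d) F, if B.rank + s ≤ d then (1:ℝ) else 0) ≤
      ((Fintype.card F : ℝ) ^ (s * (s - 1)))⁻¹ := by
  have h := X_bad_count (F := F) (d := d) (s := s)
  have hq : 2 ≤ Fintype.card F := Fintype.one_lt_card
  have hq' : (0:ℝ) < Fintype.card F := by exact_mod_cast (by omega : 0 < Fintype.card F)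
  rw [Fintype.expect_eq_sum_div_card, Finset.sum_boole]
  have hc : Fintype.card (Matrix (Fin d) (Fin d) F) = Fintype.card F ^ (d * d) := by
    rw [Module.card_eq_pow_finrank (K := F)]
    simp [Module.finrank_matrix]
  rw [hc, div_le_iff₀ (by push_cast; positivity), inv_mul_eq_div, le_div_iff₀ (by positivity)]
  exact_mod_cast h

lemma X_Zp_le_one {F : Type} [Field F] [Fintype F] [DecidableEq F] {d : ℕ} :
    ∀ (n : ℕ) (L : Matrix (Fin d) (Fin d) F), Zp n L ≤ 1
  | 0, L => by
    simp only [Zp]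
    split_ifs <;> norm_num
  | n + 1, L => by
    simp only [Zp]
    exact expect_le univ_nonempty fun u _ => X_Zp_le_one n _

lemma X_Zp_bound {F : Type} [Field F] [Fintype F] [DecidableEq F] {d s : ℕ} :
    ∀ (n : ℕ) (L : Matrix (Fin d) (Fin d) F), n * (s - 1) < L.rank →
      Zp n L ≤ n * ((Fintype.card F : ℝ) ^ (s * (s - 1)))⁻¹
  | 0, L, h => by
    have : L ≠ 0 := by
      rintro rfl
      simp at h
    simp [Zp, this]
  | n + 1, L, h => by
    set δ := ((Fintype.card F : ℝ) ^ (s * (s - 1)))⁻¹ with hδ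
    have hδ0 : 0 ≤ δ := by positivity
    have key : ∀ u, Zp n (L * u) ≤ n * δ + if u.rank + s ≤ d then (1:ℝ) else 0 := by
      intro u
      split_ifs with hu
      · have := X_Zp_le_one n (L * u)
        have : 0 ≤ n * δ := by positivity
        linarith
      · have h1 := X_sylvester L u
        have h2 := X_Zp_bound (s := s) n (L * u) (by
          rw [Nat.add_mul, Nat.one_mul] at h
          omega)
        simpa using h2
    simp only [Zp]
    refine (expect_le_expect fun u _ => key u).trans ?_
    rw [expect_add_distrib, Fintype.expect_const]
    have := X_bad_prob (F := F) (d := d) (s := s)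
    push_cast
    linarith


/-- Cylinder products. -/
def XCyl {n : ℕ} {W : Type} (g : (Fin (n+1) → W) → ℂ) : Prop :=
  ∃ φ : Fin (n+1) → (Fin (n+1) → W) → ℂ, (∀ i x, ‖φ i x‖ ≤ 1) ∧
    (∀ i x w, φ i (Function.update x i w) = φ i x) ∧ ∀ x, g x = ∏ i, φ i x

lemma XCyl.mul {n : ℕ} {W : Type} {g h : (Fin (n+1) → W) → ℂ} (hg : XCyl g) (hh : XCyl h) :
    XCyl (fun x => g x * h x) := by
  obtain ⟨φ, a1, a2, a3⟩ := hg
  obtain ⟨χ, b1, b2, b3⟩ := hh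
  refine ⟨fun i x => φ i x * χ i x, fun i x => ?_, fun i x w => ?_, fun x => ?_⟩
  · rw [norm_mul]
    exact mul_le_one₀ (a1 _ _) (norm_nonneg _) (b1 _ _)
  · simp only [a2, b2]
  · simp only [a3, b3, prod_mul_distrib]

lemma X_disc {F : Type} [Field F] [Fintype F] [DecidableEq F] {d n : ℕ} (δ : ℝ) (hδ : 0 ≤ δ)
    (hZ : Zp n (1 : Matrix (Fin d) (Fin d) F) ≤ δ ^ (2 ^ n)) (a : F)
    (g : (Fin (n+1) → Matrix (Fin d) (Fin d) F) → ℂ) (hg : XCyl g) :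
    ‖𝔼 x, ((if Matrix.trace (List.ofFn x).prod = a then (1:ℂ) else 0) - 1 / (Fintype.card F : ℂ)) * g x‖ ≤ δ := by
  classical
  obtain ⟨φ, a1, a2, a3⟩ := hg
  have hN : (0:ℝ) < Fintype.card F := by exact_mod_cast Fintype.card_pos
  have hN' : (Fintype.card F : ℂ) ≠ 0 := by exact_mod_cast hN.ne'
  have hψ : ∀ ψ : AddChar F ℂ, ψ ≠ 0 → ‖𝔼 x, ψ (Matrix.trace (List.ofFn x).prod) * g x‖ ≤ δ := by
    intro ψ hψ
    have h := (X_cyl_bound ψ hψ n 1 φ a1 a2).trans hZ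
    simp only [one_mul, ← a3] at h
    exact le_of_pow_le_pow_left₀ (by positivity) hδ h
  have e : ∀ x : Fin (n+1) → Matrix (Fin d) (Fin d) F, 
      ((if Matrix.trace (List.ofFn x).prod = a then (1:ℂ) else 0) - 1 / (Fintype.card F : ℂ)) * g x
      = ∑ ψ ∈ univ.erase (0 : AddChar F ℂ), (1 / (Fintype.card F : ℂ) * ψ (-a)) * 
          (ψ (Matrix.trace (List.ofFn x).prod) * g x) := by
    intro x
    have h := AddChar.sum_apply_eq_ite (Matrix.trace (List.ofFn x).prod - a)
    rw [← Finset.add_sum_erase _ _ (mem_univ (0 : AddChar F ℂ))] at h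
    simp only [sub_eq_zero, AddChar.zero_apply] at h
    have h2 : (if Matrix.trace (List.ofFn x).prod = a then (1:ℂ) else 0) - 1 / (Fintype.card F : ℂ)
      = 1 / (Fintype.card F : ℂ) * ∑ ψ ∈ univ.erase (0 : AddChar F ℂ), ψ (Matrix.trace (List.ofFn x).prod - a) := by
      rw [eq_sub_of_add_eq' h]
      split_ifs <;> field_simp <;> simp
    rw [h2, mul_sum, sum_mul]
    refine sum_congr rfl fun ψ _ => ?_
    rw [sub_eq_add_neg, AddChar.map_add_eq_mul]
    ring
  simp only [e]
  rw [expect_sum_comm]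
  simp only [← mul_expect]
  refine (norm_sum_le _ _).trans ?_
  have : ∀ ψ ∈ univ.erase (0 : AddChar F ℂ), 
     ‖(1 / (Fintype.card F : ℂ) * ψ (-a)) * 𝔼 x : Fin (n+1) → Matrix (Fin d) (Fin d) F,
          (ψ (Matrix.trace (List.ofFn x).prod) * g x)‖ ≤ 1 / (Fintype.card F : ℝ) * δ := by
    intro ψ h
    rw [norm_mul, norm_mul, AddChar.norm_apply]
    simp only [norm_div, norm_one, RCLike.norm_natCast, mul_one]
    gcongr
    exact hψ ψ (ne_of_mem_erase h)
  refine (sum_le_card_nsmul _ _ _ this).trans ?_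
  have hc : #(univ.erase (0 : AddChar F ℂ)) ≤ Fintype.card F := by
    refine (card_le_univ _).trans ?_
    rw [AddChar.card_eq]
  rw [nsmul_eq_mul]
  calc _ ≤ (Fintype.card F : ℝ) * (1 / (Fintype.card F : ℝ) * δ) := by
        gcongr
    _ = δ := by field_simp

lemma X_disc_prod {n : ℕ} {W κ : Type} [Fintype W] [DecidableEq κ] (δ : ℝ)
    (w : (Fin (n+1) → W) → ℂ) (H : ∀ g, XCyl g → ‖𝔼 x, w x * g x‖ ≤ δ)
    (D : κ → (Fin (n+1) → W) → ℂ) (hD : ∀ y, XCyl (D y)) (Y : Finset κ) :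
    ∀ g, XCyl g → ‖𝔼 x, w x * (g x * ∏ y ∈ Y, (1 - D y x))‖ ≤ 2 ^ #Y * δ := by
  induction Y using Finset.induction_on with
  | empty => 
    intro g hg
    simpa using H g hg
  | insert y Y hy ih =>
    intro g hg
    have e : ∀ x, w x * (g x * ∏ y ∈ insert y Y, (1 - D y x)) = 
      w x * (g x * ∏ y ∈ Y, (1 - D y x)) - w x * ((g x * D y x) * ∏ y ∈ Y, (1 - D y x)) := by
      intro x
      rw [prod_insert hy]
      ring
    simp only [e]
    rw [expect_sub_distrib, card_insert_of_notMem hy, pow_succ]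
    have h1 := ih g hg
    have h2 := ih _ (hg.mul (hD y))
    refine (norm_sub_le _ _).trans ?_
    linarith

lemma X_count {X F T : Type} [Fintype X] [Nonempty X] [Fintype F] [DecidableEq F] [Fintype T]
    (A : X → F) (e : T → F → X → ℝ) (ε : ℝ) (hε : 0 ≤ ε)
    (he0 : ∀ t a x, 0 ≤ e t a x)
    (h1 : ∀ x, ∃ t, 1 ≤ e t (A x) x)
    (h2 : ∀ t x, ∑ a, e t a x ≤ 1)
    (h3 : ∀ t a, 𝔼 x, ((if A x = a then (1:ℝ) else 0) - 1 / (Fintype.card F : ℝ)) * e t a x ≤ ε)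
    (hT : Fintype.card T < Fintype.card F) (hN : (Fintype.card F : ℝ) ^ 3 * ε < 1) : False := by
  have hT' : (Fintype.card T : ℝ) + 1 ≤ Fintype.card F := by exact_mod_cast hT
  set N : ℝ := (Fintype.card F : ℝ) with hNd
  have hNpos : 0 < N := by have : (0:ℝ) ≤ Fintype.card T := by positivity
                           linarith
  have s1 : (1:ℝ) ≤ 𝔼 x, ∑ t, ∑ a, (if A x = a then (1:ℝ) else 0) * e t a x := by
    refine le_expect univ_nonempty fun x _ => ?_
    obtain ⟨t, ht⟩ := h1 x
    refine ht.trans ?_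
    simp only [ite_mul, one_mul, zero_mul, sum_ite_eq, mem_univ, if_true]
    exact single_le_sum (f := fun t => e t (A x) x) (fun t _ => he0 t _ x) (mem_univ t)
  have s2 : 𝔼 x, ∑ t, ∑ a, (if A x = a then (1:ℝ) else 0) * e t a x =
     ∑ t, ∑ a, 𝔼 x, ((if A x = a then (1:ℝ) else 0) - 1 / N) * e t a x +
      𝔼 x, 1 / N * ∑ t, ∑ a, e t a x := by
    have : ∀ t, ∑ a, 𝔼 x, ((if A x = a then (1:ℝ) else 0) - 1 / N) * e t a x = 
      𝔼 x, ∑ a, ((if A x = a then (1:ℝ) else 0) - 1 / N) * e t a x := fun t => by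
        rw [expect_sum_comm]
    simp only [this]
    rw [← expect_sum_comm, ← expect_add_distrib]
    refine expect_congr rfl fun x _ => ?_
    simp only [mul_sum, ← sum_add_distrib]
    refine sum_congr rfl fun t _ => sum_congr rfl fun a _ => ?_
    ring
  have s3 : ∑ t, ∑ a, 𝔼 x, ((if A x = a then (1:ℝ) else 0) - 1 / N) * e t a x ≤ 
      (Fintype.card T : ℝ) * (N * ε) := by
    have : ∀ t ∈ (univ : Finset T), ∑ a, 𝔼 x, ((if A x = a then (1:ℝ) else 0) - 1 / N) * e t a x ≤ N * ε := by
      intro t _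
      refine (sum_le_card_nsmul _ _ _ fun a _ => h3 t a).trans ?_
      rw [nsmul_eq_mul, card_univ, hNd]
    refine (sum_le_card_nsmul _ _ _ this).trans ?_
    rw [nsmul_eq_mul, card_univ]
  have s4 : 𝔼 x, 1 / N * ∑ t, ∑ a, e t a x ≤ 1 / N * Fintype.card T := by
    refine expect_le univ_nonempty fun x _ => ?_
    gcongr
    refine (sum_le_card_nsmul _ _ _ fun t _ => h2 t x).trans ?_
    simp
  have s5 : 1 ≤ (Fintype.card T : ℝ) * (N * ε) + 1 / N * Fintype.card T := by linarith
  have s6 : N ≤ (Fintype.card T : ℝ) * (N ^ 2 * ε) + Fintype.card T := by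
    have := mul_le_mul_of_nonneg_left s5 hNpos.le
    have e1 : N * ((Fintype.card T : ℝ) * (N * ε) + 1 / N * Fintype.card T) = 
      (Fintype.card T : ℝ) * (N ^ 2 * ε) + Fintype.card T := by
      field_simp
    linarith
  have s7 : (Fintype.card T : ℝ) * (N ^ 2 * ε) ≤ N * (N ^ 2 * ε) := by
    gcongr
    linarith
  nlinarith

/-! ### Protocols -/

lemma X_bt_length (step : List Bool → Bool) : ∀ m, (buildTranscript step m).length = m
  | 0 => rfl
  | m + 1 => by simp [buildTranscript, X_bt_length step m]

lemma X_bt_get (step : List Bool → Bool) : ∀ m j, j < m → 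
    (buildTranscript step m)[j]? = some (step (buildTranscript step j))
  | 0, j, h => by omega
  | m + 1, j, h => by
    rw [buildTranscript]
    rcases Nat.lt_succ_iff_lt_or_eq.1 h with h | rfl
    · rw [List.getElem?_append_left (by rw [X_bt_length]; exact h), X_bt_get step m j h]
    · rw [List.getElem?_append_right (by rw [X_bt_length])]
      simp [X_bt_length]

lemma X_bt_prefix (step : List Bool → Bool) : ∀ m s b, (s ++ [b]) <+: buildTranscript step m → step s = b
  | 0, s, b, h => by simp [buildTranscript] at h
  | m + 1, s, b, h => by
    rw [buildTranscript, List.prefix_concat_iff] at h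
    rcases h with h | h
    · obtain ⟨rfl, h2⟩ := List.append_inj' h rfl
      simpa using h2.symm
    · exact X_bt_prefix step m s b h

lemma X_bt_eq (step : List Bool → Bool) : ∀ m (t : List Bool), t.length = m →
    (∀ s b, (s ++ [b]) <+: t → step s = b) → buildTranscript step m = t
  | 0, t, h, _ => by
    rw [List.length_eq_zero_iff] at h
    simp [h, buildTranscript]
  | m + 1, t, h, h2 => by
    rcases List.eq_nil_or_concat t with rfl | ⟨t', b, rfl⟩
    · simp at h
    · simp only [List.concat_eq_append] at *
      have e := X_bt_eq step m t' (by simpa using h) (fun s c hs => h2 s c (hs.trans (List.prefix_append _ _)))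
      rw [buildTranscript, e, h2 t' b List.prefix_rfl]

/-- Player `i` is consistent with transcript `t`. -/
def XCons {k c : ℕ} {I Y : Type} {Vis : Fin k → I → I → Prop} (P : DProt k I Vis Y c) (i : Fin k)
    (t : List Bool) (z : I) : Prop :=
  ∀ s b, (s ++ [b]) <+: t → P.speaker s = i → P.msg s z = b

lemma XCons_vis {k c : ℕ} {I Y : Type} {Vis : Fin k → I → I → Prop} (P : DProt k I Vis Y c) (i : Fin k)
    (t : List Bool) (z z' : I) (h : Vis i z z') : XCons P i t z ↔ XCons P i t z' := by
  constructor
  · intro H s b h1 h2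
    rw [← P.msg_nof s z z' (by rw [h2]; exact h)]
    exact H s b h1 h2
  · intro H s b h1 h2
    rw [P.msg_nof s z z' (by rw [h2]; exact h)]
    exact H s b h1 h2

lemma XCons_iff {k c : ℕ} {I Y : Type} {Vis : Fin k → I → I → Prop} (P : DProt k I Vis Y c)
    (t : List Bool) (ht : t.length = c) (z : I) : 
    (∀ i, XCons P i t z) ↔ buildTranscript (fun s => P.msg s z) c = t := by
  constructor
  · intro h
    exact X_bt_eq _ _ _ ht fun s b hs => h _ s b hs rfl
  · rintro rfl i s b hs _
    exact X_bt_prefix (fun s => P.msg s z) c s b hs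

lemma X_main {F : Type} [Field F] [Fintype F] [DecidableEq F] {d n c : ℕ} (δ : ℝ) (hδ : 0 ≤ δ)
    (hZ : Zp n (1 : Matrix (Fin d) (Fin d) F) ≤ δ ^ (2 ^ n))
    (hN : (Fintype.card F : ℝ) ^ 3 * (2 ^ Fintype.card F * δ) < 1)
    (hc : 2 ^ c < Fintype.card F)
    (P : DProt (n+2) _ (liftVis (n+2) (Matrix (Fin d) (Fin d) F) F) Bool c)
    (hP : ∀ z : (Fin (n + 1) → Matrix (Fin d) (Fin d) F) × F, 
      P.run z = decide (Matrix.trace (List.ofFn z.1).prod = z.2)) : False := by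
  classical
  let X := Fin (n+1) → Matrix (Fin d) (Fin d) F
  let A : X → F := fun x => Matrix.trace (List.ofFn x).prod
  let Q : List.Vector Bool c → F → X → Fin (n+1) → Prop := fun t y x i => XCons P i.castSucc t.1 (x, y)
  let D : List.Vector Bool c → F → X → Prop := fun t y x => ∀ i, Q t y x i
  let E : List.Vector Bool c → F → X → Prop := fun t y x => D t y x ∧ ∀ y', y' ≠ y → ¬ D t y' x
  let e : List.Vector Bool c → F → X → ℝ := fun t y x => if E t y x then 1 else 0
  have hcyl : ∀ t y, XCyl (fun x => if D t y x then (1:ℂ) else 0) := by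
    intro t y
    refine ⟨fun i x => if Q t y x i then 1 else 0, fun i x => ?_, fun i x w => ?_, fun x => ?_⟩
    · dsimp only
      split_ifs <;> simp
    · have : Q t y (Function.update x i w) i ↔ Q t y x i := by
        refine XCons_vis P _ _ _ _ ⟨fun j hj => ?_, Or.inr rfl⟩
        have : j ≠ i := by
          rintro rfl
          exact hj rfl
        exact Function.update_of_ne this _ _
      simp only [this]
    · rw [prod_ite_zero]
      simp [D]
  refine X_count A e (2 ^ Fintype.card F * δ) (by positivity) ?_ ?_ ?_ ?_ (by simpa using hc) hN
  · intro t a x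
    simp only [e]
    split_ifs <;> norm_num
  · intro x
    let t : List.Vector Bool c := ⟨buildTranscript (fun s => P.msg s (x, A x)) c, X_bt_length _ _⟩
    have ht := (XCons_iff P t.1 t.2 (x, A x)).2 rfl
    have hout : P.out t.1 = true := by
      have := hP (x, A x)
      rw [DProt.run] at this
      rw [this]
      exact decide_eq_true rfl
    refine ⟨t, ?_⟩
    have : E t (A x) x := by
      refine ⟨fun i => ht _, fun y hy hD => ?_⟩
      have h2 : ∀ i, XCons P i t.1 (x, y) := by
        intro i
        refine Fin.lastCases ?_ (fun i => hD i) i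
        refine (XCons_vis P _ _ (x, A x) (x, y) ⟨fun j _ => rfl, Or.inl ?_⟩).1 (ht _)
        simp
      have h3 := (XCons_iff P t.1 t.2 (x, y)).1 h2
      have h4 := hP (x, y)
      rw [DProt.run, h3, hout] at h4
      exact hy (of_decide_eq_true h4.symm).symm
    simp [e, this]
  · intro t x
    simp only [e]
    rw [sum_boole]
    have : #{a | E t a x} ≤ 1 := by
      rw [card_le_one]
      intro a ha b hb
      simp only [mem_filter, mem_univ, true_and] at ha hb
      by_contra hab
      exact ha.2 b (Ne.symm hab) hb.1
    exact_mod_cast this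
  · intro t a
    have h := X_disc_prod δ _ (fun g hg => X_disc δ hδ hZ a g hg) 
      (fun y x => if D t y x then (1:ℂ) else 0) (hcyl t) (univ.erase a) _ (hcyl t a)
    have h5 : ∀ x : X, (if D t a x then (1:ℂ) else 0) * ∏ y ∈ univ.erase a, (1 - if D t y x then (1:ℂ) else 0) = 
        ((e t a x : ℝ) : ℂ) := by
      intro x
      have : ∀ y, (1 - if D t y x then (1:ℂ) else 0) = if ¬ D t y x then 1 else 0 := by
        intro y
        by_cases hh : D t y x <;> simp [hh]
      simp only [this]
      rw [prod_ite_zero]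
      simp only [e, E, mem_erase, mem_univ, and_true, prod_const_one]
      by_cases h1 : D t a x
      · by_cases h2 : ∀ y', y' ≠ a → ¬ D t y' x
        · rw [if_pos h1, if_pos h2, if_pos ⟨h1, h2⟩]
          simp
        · rw [if_pos h1, if_neg h2, if_neg (fun h => h2 h.2)]
          simp
      · rw [if_neg h1, zero_mul, if_neg (fun h => h1 h.1)]
        simp
    have h6 : ((𝔼 x, ((if A x = a then (1:ℝ) else 0) - 1 / (Fintype.card F : ℝ)) * e t a x : ℝ) : ℂ) = 
        𝔼 x : X, ((if Matrix.trace (List.ofFn x).prod = a then (1:ℂ) else 0) - 1 / (Fintype.card F : ℂ)) * 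
          ((if D t a x then (1:ℂ) else 0) * ∏ y ∈ univ.erase a, (1 - if D t y x then (1:ℂ) else 0)) := by
      rw [Fintype.expect_eq_sum_div_card, Fintype.expect_eq_sum_div_card]
      simp only [h5]
      rw [Complex.ofReal_div, Complex.ofReal_sum]
      congr 1
      refine sum_congr rfl fun x _ => ?_
      rw [Complex.ofReal_mul, Complex.ofReal_sub]
      congr 2
      · simp only [A]
        split_ifs <;> simp
      · simp
    rw [← h6, Complex.norm_real] at h
    refine (le_abs_self _).trans (h.trans ?_)
    gcongr
    · norm_num
    · exact card_le_univ _

lemma X_exists {F W : Type} [Fintype F] [DecidableEq F] {n : ℕ} (A : (Fin (n+1) → W) → F) :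
    ∃ c, ∃ P : DProt (n+2) _ (liftVis (n+2) W F) Bool c,
      ∀ z : (Fin (n+1) → W) × F, P.run z = decide (A z.1 = z.2) := by
  classical
  let N := Fintype.card F
  let e : F ≃ Fin N := Fintype.equivFin F
  refine ⟨N + 1, ⟨fun t => if t.length < N then Fin.last (n+1) else 0,
    fun t z => if t.length < N then decide ((e (A z.1) : ℕ) = t.length) else 
      decide (t[(e z.2 : ℕ)]? = some true), ?_, fun t => decide (t[N]? = some true)⟩, ?_⟩
  · intro t x x' h
    by_cases ht : t.length < N
    · simp only [ht, if_true] at h ⊢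
      have : x.1 = x'.1 := by
        funext j
        refine h.1 j ?_
        have := j.2
        simp
        omega
      rw [this]
    · simp only [ht, if_false] at h ⊢
      have : x.2 = x'.2 := by
        rcases h.2 with h | h
        · simp at h
        · exact h
      rw [this]
  · intro z
    simp only [DProt.run]
    rw [X_bt_get _ _ _ (Nat.lt_succ_self _)]
    simp only [X_bt_length, lt_irrefl, if_false]
    rw [X_bt_get _ _ _ (e z.2).2]
    simp only [X_bt_length, (e z.2).2, if_true]
    simp [Fin.val_inj]

lemma X_num_aux (n : ℕ) (l ρ s K q : ℝ) (hl : 1 ≤ l) (hρ : 1 ≤ ρ) (hs : 4 * ρ ≤ s) (hK : 2 ≤ K)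
    (hq : 2 ≤ q) (hρsq : ρ ^ 2 = K * 2 ^ (n+2) * (q / l)) :
    (n:ℝ) + 5 * q * 2 ^ n ≤ l * (s * (s - 1)) := by
  have e2 : (n:ℝ) ≤ 2 ^ n := by exact_mod_cast (Nat.lt_two_pow_self).le
  have h1 : 12 * ρ ^ 2 ≤ s * (s - 1) := by nlinarith
  have h2 : l * (12 * ρ ^ 2) = 12 * K * 2 ^ (n+2) * q := by
    rw [hρsq]
    field_simp
  have h3 : l * (12 * ρ ^ 2) ≤ l * (s * (s - 1)) := mul_le_mul_of_nonneg_left h1 (by linarith)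
  have h4 : (0:ℝ) < 2 ^ n := by positivity
  have h5 : (0:ℝ) < q * 2 ^ n := by positivity
  have h6 : (2:ℝ) ^ n ≤ q * 2 ^ n := by nlinarith
  have h7 : q * 2 ^ n ≤ K * (q * 2 ^ n) := by nlinarith
  rw [h2, pow_add] at h3
  nlinarith

set_option maxHeartbeats 1000000 in
lemma X_num (F : Type) [Field F] [Fintype F] [DecidableEq F] (n d : ℕ)
    (hd : d = ⌈(4:ℝ) * ((n + 2 : ℕ) : ℝ) ^ ((3 : ℝ) / 2) * 2 ^ (((n + 2 : ℕ) : ℝ) / 2) *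
              Real.sqrt ((Fintype.card F : ℝ) / Real.logb 2 (Fintype.card F))⌉₊) :
    ∃ δ : ℝ, 0 ≤ δ ∧ Zp n (1 : Matrix (Fin d) (Fin d) F) ≤ δ ^ (2 ^ n) ∧
      (Fintype.card F : ℝ) ^ 3 * (2 ^ Fintype.card F * δ) < 1 := by
  have hq : 2 ≤ Fintype.card F := Fintype.one_lt_card
  set q := Fintype.card F with hqd
  have hq2 : (2:ℝ) ≤ q := by exact_mod_cast hq
  set l := Real.logb 2 (q:ℝ) with hl
  have hl1 : 1 ≤ l := by
    rw [hl, Real.le_logb_iff_rpow_le (by norm_num) (by positivity)]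
    simpa using hq2
  have hlq : (2:ℝ) ^ l = q := Real.rpow_logb (by norm_num) (by norm_num) (by positivity)
  have hlle : l ≤ q := by
    rw [hl, Real.logb_le_iff_le_rpow (by norm_num) (by positivity), Real.rpow_natCast]
    exact_mod_cast (Nat.lt_two_pow_self).le
  set K : ℝ := ((n + 2 : ℕ) : ℝ) with hK
  have hK2 : 2 ≤ K := by rw [hK]; push_cast; linarith [(Nat.cast_nonneg n : (0:ℝ) ≤ n)]
  set ρ := Real.sqrt (K * 2 ^ (n+2) * (q / l)) with hρ
  have hql : 1 ≤ q / l := by rw [le_div_iff₀ (by linarith)]; linarith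
  have hρsq : ρ ^ 2 = K * 2 ^ (n+2) * (q / l) := Real.sq_sqrt (by positivity)
  have hρ1 : 1 ≤ ρ := by
    rw [hρ, Real.one_le_sqrt]
    have : (1:ℝ) ≤ 2 ^ (n+2) := one_le_pow₀ (by norm_num)
    have : 1 ≤ K * 2 ^ (n+2) := by nlinarith
    nlinarith
  have hR : (4:ℝ) * K ^ ((3 : ℝ) / 2) * 2 ^ (K / 2) * Real.sqrt (q / l) = K * (4 * ρ) := by
    have e1 : K ^ ((3 : ℝ) / 2) = K * Real.sqrt K := by
      rw [Real.sqrt_eq_rpow, show (3:ℝ)/2 = 1 + 1/2 by norm_num, Real.rpow_add (by linarith), Real.rpow_one]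
    have e2 : (2:ℝ) ^ (K / 2) = Real.sqrt (2 ^ (n+2)) := by
      rw [Real.sqrt_eq_rpow, ← Real.rpow_natCast, ← Real.rpow_mul (by norm_num)]
      congr 1
      rw [hK]
      ring
    rw [e1, e2, hρ, Real.sqrt_mul (by positivity), Real.sqrt_mul (by linarith)]
    ring
  rw [hR] at hd
  have hd4 : K * (4 * ρ) ≤ d := by rw [hd]; exact Nat.le_ceil _
  set s := ⌈(d:ℝ) / K⌉₊ with hs
  have hs1 : 4 * ρ ≤ s := by
    refine le_trans ?_ (Nat.le_ceil _)
    rw [le_div_iff₀ (by linarith)]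
    linarith
  have hs2 : (s:ℝ) < d / K + 1 := Nat.ceil_lt_add_one (by positivity)
  have hs3 : 1 ≤ s := by
    have : (1:ℝ) ≤ s := by linarith
    exact_mod_cast this
  have hcast : ((s - 1 : ℕ) : ℝ) = s - 1 := by rw [Nat.cast_sub hs3]; simp
  have hrank : n * (s - 1) < d := by
    have h1 : K * (s - 1 : ℝ) < d := by
      have : (s:ℝ) - 1 < d / K := by linarith
      rw [lt_div_iff₀ (by linarith)] at this
      linarith
    have h2 : (n:ℝ) * ((s - 1 : ℕ) : ℝ) < d := by
      rw [hcast]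
      have h3 : (0:ℝ) ≤ s - 1 := by linarith
      have h4 : (n:ℝ) ≤ K := by rw [hK]; push_cast; linarith
      nlinarith
    exact_mod_cast h2
  have hZ := X_Zp_bound (F := F) (d := d) (s := s) n 1 (by rw [Matrix.rank_one]; simpa using hrank)
  refine ⟨((2:ℝ) ^ (5 * q))⁻¹, by positivity, hZ.trans ?_, ?_⟩
  · rw [inv_pow, ← div_eq_mul_inv, div_le_iff₀ (by positivity), inv_mul_eq_div, le_div_iff₀ (by positivity)]
    have e1 : (q:ℝ) ^ (s * (s - 1)) = (2:ℝ) ^ (l * (s * (s - 1))) := by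
      rw [Real.rpow_mul (by norm_num), hlq, ← Real.rpow_natCast]
      push_cast
      rw [hcast]
    rw [← hqd, e1]
    have e2 : (n:ℝ) ≤ 2 ^ n := by exact_mod_cast (Nat.lt_two_pow_self).le
    calc (n:ℝ) * ((2:ℝ) ^ (5 * q)) ^ 2 ^ n ≤ 2 ^ n * ((2:ℝ) ^ (5 * q)) ^ 2 ^ n := by gcongr
      _ = (2:ℝ) ^ ((n : ℝ) + 5 * q * 2 ^ n) := by
        rw [← pow_mul, ← pow_add, ← Real.rpow_natCast]
        push_cast
        rfl
      _ ≤ (2:ℝ) ^ (l * (s * (s - 1))) :=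
        Real.rpow_le_rpow_of_exponent_le (by norm_num) (X_num_aux n l ρ s K q hl1 hρ1 hs1 hK2 hq2 hρsq)
  · have h1 : (q:ℝ) < 2 ^ q := by exact_mod_cast Nat.lt_two_pow_self
    have h2 : (q:ℝ) ^ 3 < (2 ^ q) ^ 3 := by gcongr
    rw [← mul_assoc, ← div_eq_mul_inv, div_lt_one (by positivity)]
    have h3 : (2:ℝ) ^ (5 * q) = (2 ^ q) ^ 3 * 2 ^ q * 2 ^ q := by ring
    rw [h3]
    have h4 : (1:ℝ) ≤ 2 ^ q := one_le_pow₀ (by norm_num)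
    calc (q:ℝ) ^ 3 * 2 ^ q < (2 ^ q) ^ 3 * 2 ^ q := by gcongr
      _ ≤ _ := le_mul_of_one_le_right (by positivity) h4

end XHelpers

/-- There is a constant `c > 0` such that for every finite field `F`
(i.e. every prime power `N = |F| ≥ 2`) and every integer `k ≥ 2`, setting
`d = ⌈c · k^{3/2} · 2^{k/2} · √(N / log₂ N)⌉`, letting
`A = T_{N,d,k} : M_d^{k-1} → F` be the trace function on `k - 1` matrix arguments and
`f = Lift(A)` the associated graph function, one has `D_k(f) ≥ log₂ N`. -/
theorem explicit_graph_fn_lower_bound :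
    ∃ c : ℝ, 0 < c ∧
      ∀ (F : Type) [Field F] [Fintype F] [DecidableEq F] (k : ℕ), 2 ≤ k →
        ∀ d : ℕ,
          d = ⌈c * (k : ℝ) ^ ((3 : ℝ) / 2) * 2 ^ ((k : ℝ) / 2) *
              Real.sqrt ((Fintype.card F : ℝ) / Real.logb 2 (Fintype.card F))⌉₊ →
          (DCC (liftVis k (Matrix (Fin d) (Fin d) F) F)
              (fun z => decide (Matrix.trace (List.ofFn z.1).prod = z.2))
              Set.univ : ℝ) ≥
            Real.logb 2 (Fintype.card F) := by
  refine ⟨4, by norm_num, ?_⟩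
  intro F _ _ _ k hk d hd
  obtain ⟨n, rfl⟩ : ∃ n, k = n + 2 := ⟨k - 2, by omega⟩
  obtain ⟨δ, h0, h1, h2⟩ := X_num F n d hd
  have hne : {c | ∃ P : DProt (n+2) _ (liftVis (n+2) (Matrix (Fin d) (Fin d) F) F) Bool c,
      ∀ x ∈ Set.univ, P.run x = decide (Matrix.trace (List.ofFn x.1).prod = x.2)}.Nonempty := by
    obtain ⟨c, P, hP⟩ := X_exists (n := n) 
      (fun x : Fin (n+1) → Matrix (Fin d) (Fin d) F => Matrix.trace (List.ofFn x).prod)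
    exact ⟨c, P, fun x _ => hP x⟩
  obtain ⟨P, hP⟩ := Nat.sInf_mem hne
  by_contra hlt
  push Not at hlt
  refine X_main δ h0 h1 h2 ?_ P (fun z => hP z trivial)
  have hq : 2 ≤ Fintype.card F := Fintype.one_lt_card
  rw [Real.lt_logb_iff_rpow_lt (by norm_num) (by exact_mod_cast (by omega : 0 < Fintype.card F)),
    Real.rpow_natCast] at hlt
  exact_mod_cast hlt
end

section
/- Let k ≥ 2, and let f : [n]^{k−1} × [N] → {0,1} be a graph function with base function A = Base(f). Then for every natural number b, N^1_k(f) ≥ min { N^h_{k−1,b}(A) − log₂ N − k + 1 , b }. -/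
theorem bt_length (step : List Bool → Bool) (m : ℕ) : (buildTranscript step m).length = m := by
  induction m with
  | zero => rfl
  | succ m ih => simp [buildTranscript, ih]

theorem bt_eq_iff (step : List Bool → Bool) (τ : List Bool) :
    (∀ u v, u ++ [v] <+: τ → step u = v) ↔ buildTranscript step τ.length = τ := by
  induction τ using List.reverseRecOn with
  | nil => simp [buildTranscript]
  | append_singleton σ w ih =>
    rw [List.length_append, List.length_singleton, buildTranscript]
    constructor
    · intro h
      have h1 := ih.1 (fun u v huv => h u v (huv.trans (List.prefix_append _ _)))
      rw [h1, h σ w (List.prefix_refl _)]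
    · intro h u v huv
      obtain ⟨h1, h2⟩ := List.append_inj' h rfl
      rw [h1] at h2
      rcases List.prefix_concat_iff.1 huv with h3 | h3
      · obtain ⟨h4, h5⟩ := List.append_inj' h3 rfl
        subst h4
        simp at h2 h5
        rw [h2, h5]
      · exact ih.2 h1 u v h3

/-- transcripts of a non-adaptive sequence of votes -/
theorem bt_votes (g : ℕ → Bool) (m : ℕ) :
    buildTranscript (fun t => g t.length) m = List.replicate m true ↔ ∀ i < m, g i = true := by
  induction m with
  | zero => simp [buildTranscript]
  | succ m ih =>
    rw [buildTranscript, bt_length, List.replicate_succ']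
    constructor
    · intro h i hi
      obtain ⟨h1, h2⟩ := List.append_inj' h rfl
      rcases Nat.lt_succ_iff_lt_or_eq.1 hi with h3 | h3
      · exact ih.1 h1 i h3
      · subst h3
        simpa using h2
    · intro h
      rw [ih.2 (fun i hi => h i (by omega)), h m (by omega)]

theorem NHelp_le {k : ℕ} {I Y T : Type} [Fintype T] (Vis : Fin k → I → I → Prop)
    (A : I → Y) (b t B : ℕ) (htb : t ≤ b) (hT : Fintype.card T = 2 ^ t) (H : I → T)
    (h : ∀ i, NCC Vis A (H ⁻¹' {i}) ≤ B) : NHelp Vis A b ≤ t + B := by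
  let e : T ≃ Fin (2 ^ t) := Fintype.equivFinOfCardEq hT
  have hmem : NHelp Vis A b ≤ t + Finset.univ.sup fun i => NCC Vis A ((fun x => e (H x)) ⁻¹' {i}) :=
    Nat.sInf_le ⟨t, htb, fun x => e (H x), rfl⟩
  refine hmem.trans (Nat.add_le_add_left (Finset.sup_le fun i _ => ?_) t)
  have : (fun x => e (H x)) ⁻¹' {i} = H ⁻¹' {e.symm i} := by
    ext x
    simp [Equiv.eq_symm_apply]
  rw [this]
  exact h _

theorem NHelp_zero {k : ℕ} {I Y : Type} (hk : 0 < k) (Vis : Fin k → I → I → Prop)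
    (A : I → Y) (b : ℕ) (h : ∀ x x', A x = A x') : NHelp Vis A b ≤ 0 := by
  classical
  have := NHelp_le Vis A b 0 0 (Nat.zero_le _) (T := Unit) (by simp) (fun _ => ()) (by
    intro i
    refine Nat.sInf_le ⟨0, 0, rfl, ⟨fun _ _ => ⟨0, hk⟩, fun _ _ _ => true, fun _ _ _ _ _ => rfl,
      fun _ _ => if h : Nonempty I then some (A (Classical.choice h)) else none⟩, ?_⟩
    intro x _
    have hx : Nonempty I := ⟨x⟩
    have : A (Classical.choice hx) = A x := h _ _
    simp [NProt.run, hx, this])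
  simpa using this

/-- The verification protocol: the prover sends a value, each player votes. -/
theorem NCC_le_verify {K N : ℕ} {I : Type} (hK : 0 < K) (Vis : Fin K → I → I → Prop)
    (A : I → Fin N) (S : Set I) (good : Fin K → Fin N → I → Prop)
    (hgood : ∀ j y x x', Vis j x x' → (good j y x ↔ good j y x'))
    (hS : ∀ x ∈ S, ∀ y, (∀ j, good j y x) ↔ y = A x) :
    NCC Vis A S ≤ Nat.clog 2 N + K := by
  classical
  obtain ⟨enc⟩ : Nonempty (Fin N ↪ (Fin (Nat.clog 2 N) → Bool)) := by
    apply Function.Embedding.nonempty_of_card_le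
    simpa using Nat.le_pow_clog (by norm_num) N
  let spk : ℕ → Fin K := fun i => if h : i < K then ⟨i, h⟩ else ⟨0, hK⟩
  let vote : (Fin (Nat.clog 2 N) → Bool) → I → ℕ → Bool := fun q x i =>
    decide (∃ y, enc y = q ∧ good (spk i) y x)
  let dec : (Fin (Nat.clog 2 N) → Bool) → Option (Fin N) := fun q =>
    if h : ∃ y, enc y = q then some h.choose else none
  have hdec : ∀ y, dec (enc y) = some y := by
    intro y
    have h : ∃ y', enc y' = enc y := ⟨y, rfl⟩
    simp only [dec, dif_pos h]
    rw [enc.injective h.choose_spec]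
  let P : NProt K I Vis (Option (Fin N)) (Nat.clog 2 N) K :=
    ⟨fun _ t => spk t.length, fun q t x => vote q x t.length, by
      intro q t x x' hv
      simp only [vote, hgood _ _ x x' hv],
     fun q t => if t = List.replicate K true then dec q else none⟩
  have hrun : ∀ q x, P.run q x = if (∀ j, ∃ y, enc y = q ∧ good j y x) then dec q else none := by
    intro q x
    have : (∀ i < K, vote q x i = true) ↔ (∀ j, ∃ y, enc y = q ∧ good j y x) := by
      simp only [vote, decide_eq_true_eq]
      constructor
      · intro h j
        have := h j j.2
        simpa [spk] using this
      · intro h i _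
        exact h _
    simp only [NProt.run, P, bt_votes (vote q x), this]
  refine Nat.sInf_le ⟨_, _, rfl, P, ?_⟩
  intro x hx
  refine ⟨fun q => ?_, enc (A x), ?_⟩
  · rw [hrun]
    split_ifs with h
    · right
      obtain ⟨y, rfl, _⟩ := h ⟨0, hK⟩
      rw [hdec, (hS x hx y).1]
      intro j
      obtain ⟨y', hy', hg⟩ := h j
      rwa [← enc.injective hy']
    · left; rfl
  · rw [hrun, if_pos, hdec]
    intro j
    exact ⟨A x, rfl, (hS x hx _).2 rfl j⟩

theorem NCCbool_mem (k n N : ℕ) (hk : 2 ≤ k)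
    (f : (Fin (k - 1) → Fin n) × Fin N → Bool) :
    ∃ a c, NCCbool (liftVis k (Fin n) (Fin N)) f = a + c ∧
      ∃ P : NProt k _ (liftVis k (Fin n) (Fin N)) Bool a c,
    ∀ x, f x = true ↔ ∃ p, P.run p x = true := by
  classical
  refine Nat.sInf_mem (s := { m | ∃ a c, m = a + c ∧
    ∃ P : NProt k _ (liftVis k (Fin n) (Fin N)) Bool a c,
    ∀ x, f x = true ↔ ∃ p, P.run p x = true }) ?_
  have hsymm : ∀ i x x', liftVis k (Fin n) (Fin N) i x x' → liftVis k (Fin n) (Fin N) i x' x :=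
    fun i x x' h => ⟨fun j hj => (h.1 j hj).symm, h.2.imp id Eq.symm⟩
  have htrans : ∀ i x x' x'', liftVis k (Fin n) (Fin N) i x x' →
      liftVis k (Fin n) (Fin N) i x' x'' → liftVis k (Fin n) (Fin N) i x x'' :=
    fun i x x' x'' h h' => ⟨fun j hj => (h.1 j hj).trans (h'.1 j hj), by
      rcases h.2 with h1 | h1
      · exact Or.inl h1
      · rcases h'.2 with h2 | h2
        · exact Or.inl h2
        · exact Or.inr (h1.trans h2)⟩
  let I := (Fin (k - 1) → Fin n) × Fin N
  obtain ⟨enc⟩ : Nonempty (I ↪ (Fin (Fintype.card I) → Bool)) := by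
    apply Function.Embedding.nonempty_of_card_le
    simpa using Nat.lt_two_pow_self.le
  let spk : ℕ → Fin k := fun i => if i = 0 then ⟨0, by omega⟩ else ⟨k - 1, by omega⟩
  let vote : (Fin (Fintype.card I) → Bool) → I → ℕ → Bool := fun q x i =>
    decide (∃ y, enc y = q ∧ liftVis k (Fin n) (Fin N) (spk i) x y)
  refine ⟨_, Fintype.card I, 2, rfl, ⟨fun _ t => spk t.length, fun q t x => vote q x t.length, ?_,
    fun q t => decide (t = List.replicate 2 true ∧ ∃ y, enc y = q ∧ f y = true)⟩, ?_⟩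
  · intro q t x x' hv
    simp only [vote, decide_eq_decide]
    constructor
    · rintro ⟨y, hy, h⟩
      exact ⟨y, hy, htrans _ _ _ _ (hsymm _ _ _ hv) h⟩
    · rintro ⟨y, hy, h⟩
      exact ⟨y, hy, htrans _ _ _ _ hv h⟩
  · intro x
    simp only [NProt.run, decide_eq_true_eq]
    constructor
    · intro hx
      refine ⟨enc x, (bt_votes (vote (enc x) x) 2).2 ?_, x, rfl, hx⟩
      intro i _
      simp only [vote, decide_eq_true_eq]
      exact ⟨x, rfl, fun _ _ => rfl, Or.inr rfl⟩
    · rintro ⟨q, h1, y, rfl, hy⟩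
      have h2 := (bt_votes (vote (enc y) x) 2).1 h1
      have h3 := h2 0 (by norm_num)
      have h4 := h2 1 (by norm_num)
      simp only [vote, decide_eq_true_eq] at h3 h4
      obtain ⟨y1, e1, h3⟩ := h3
      obtain ⟨y2, e2, h4⟩ := h4
      rw [enc.injective e1] at h3
      rw [enc.injective e2] at h4
      have : x = y := by
        apply Prod.ext
        · funext j
          apply h4.1
          have := j.2
          simp [spk]
          omega
        · rcases h3.2 with h | h
          · simp [spk] at h
            omega
          · exact h
      rwa [this]

/-- Let `k ≥ 2` and let `f : [n]^{k-1} × [N] → {0,1}` be a graph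
function with base function `A = Base f`.  Then for every natural number `b`,
`N¹_k(f) ≥ min { N^h_{k-1,b}(A) - log₂ N - k + 1 , b }`. -/
theorem graph_fn_lower_bound_nondet_help (k n N b : ℕ) (hk : 2 ≤ k)
    (f : (Fin (k - 1) → Fin n) × Fin N → Bool)
    (A : (Fin (k - 1) → Fin n) → Fin N)
    (hf : ∀ x y, f (x, y) = true ↔ A x = y) :
    (NCCbool (liftVis k (Fin n) (Fin N)) f : ℝ) ≥
      min ((NHelp (nofVis (k - 1) (Fin n)) A b : ℝ) - Real.logb 2 (N : ℝ) - (k : ℝ) + 1)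
        (b : ℝ) := by
  classical
  obtain ⟨a, c, hm, P, hP⟩ := NCCbool_mem k n N hk f
  rw [hm]
  have hlog : 0 ≤ Real.logb 2 (N : ℝ) := by
    rcases Nat.eq_zero_or_pos N with h | h
    · simp [h]
    · exact Real.logb_nonneg (by norm_num) (by exact_mod_cast h)
  have hkR : (2 : ℝ) ≤ k := by exact_mod_cast hk
  have hmR : (0 : ℝ) ≤ ((a + c : ℕ) : ℝ) := Nat.cast_nonneg _
  by_cases hconst : ∀ x x', A x = A x'
  · have h0 : NHelp (nofVis (k - 1) (Fin n)) A b = 0 :=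
      Nat.le_zero.1 (NHelp_zero (by omega) _ A b hconst)
    rw [h0]
    refine (min_le_left _ _).trans ?_
    push_cast at hmR ⊢
    linarith
  push Not at hconst
  obtain ⟨x₁, x₂, hne⟩ := hconst
  rcases le_or_gt b (a + c) with hb | hb
  · exact (min_le_right _ _).trans (by exact_mod_cast hb)
  have hN : 2 ≤ N := by
    have h1 := (A x₁).2
    have h2 := (A x₂).2
    have h3 : (A x₁ : ℕ) ≠ A x₂ := fun h => hne (Fin.ext h)
    omega
  obtain ⟨d, rfl⟩ : ∃ d, c = d + 1 := by
    cases c with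
    | succ d => exact ⟨d, rfl⟩
    | zero =>
      exfalso
      obtain ⟨p, hp⟩ := (hP (x₁, A x₁)).1 ((hf _ _).2 rfl)
      exact hne ((hf _ _).1 ((hP (x₁, A x₂)).2 ⟨p, hp⟩))
  have hex : ∀ x, ∃ p, P.run p (x, A x) = true := fun x => (hP _).1 ((hf _ _).2 rfl)
  choose pf hpf using hex
  let H : (Fin (k - 1) → Fin n) → (Fin a → Bool) × List.Vector Bool d := fun x =>
    (pf x, ⟨buildTranscript (fun t => P.msg (pf x) t (x, A x)) d, bt_length _ _⟩)
  have hmain : NHelp (nofVis (k - 1) (Fin n)) A b ≤ (a + d) + (Nat.clog 2 N + (k - 1)) := by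
    refine NHelp_le _ A b (a + d) _ (by omega) (by simp [pow_add]) H ?_
    rintro ⟨p, τ, hτ⟩
    refine NCC_le_verify (by omega) _ A _ (fun j y x =>
      (∀ u v, u ++ [v] <+: τ → (P.speaker p u : ℕ) = j → P.msg p u (x, y) = v) ∧
      ((P.speaker p τ : ℕ) = j → P.out p (τ ++ [P.msg p τ (x, y)]) = true)) ?_ ?_
    · intro j y x x' hv
      have key : ∀ u, (P.speaker p u : ℕ) = j → P.msg p u (x, y) = P.msg p u (x', y) := by
        intro u hu
        refine P.msg_nof p u _ _ ⟨fun i hi => hv i ?_, Or.inr rfl⟩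
        intro h
        exact hi (by rw [hu, h])
      constructor
      · rintro ⟨h1, h2⟩
        exact ⟨fun u v huv hu => by rw [← key u hu]; exact h1 u v huv hu,
          fun hu => by rw [← key τ hu]; exact h2 hu⟩
      · rintro ⟨h1, h2⟩
        exact ⟨fun u v huv hu => by rw [key u hu]; exact h1 u v huv hu,
          fun hu => by rw [key τ hu]; exact h2 hu⟩
    · intro x hx y
      have hx' : H x = (p, ⟨τ, hτ⟩) := hx
      have hp : pf x = p := congrArg Prod.fst hx'
      have ht : buildTranscript (fun t => P.msg p t (x, A x)) d = τ := by
        rw [← hp]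
        exact congrArg (fun z => z.2.1) hx'
      have hout : P.out p (τ ++ [P.msg p τ (x, A x)]) = true := by
        have := hpf x
        rw [hp] at this
        simpa only [NProt.run, buildTranscript, ht] using this
      have hcons := (bt_eq_iff (fun t => P.msg p t (x, A x)) τ).2 (by rw [hτ]; exact ht)
      constructor
      · intro hg
        have hlast : ∀ u, ¬ (P.speaker p u : ℕ) < k - 1 →
            P.msg p u (x, y) = P.msg p u (x, A x) := by
          intro u hu
          have := (P.speaker p u).2
          exact P.msg_nof p u _ _ ⟨fun _ _ => rfl, Or.inl (by omega)⟩
        have ht' : buildTranscript (fun t => P.msg p t (x, y)) d = τ := by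
          have := (bt_eq_iff (fun t => P.msg p t (x, y)) τ).1 (by
            intro u v huv
            by_cases hu : (P.speaker p u : ℕ) < k - 1
            · exact (hg ⟨_, hu⟩).1 u v huv rfl
            · exact (hlast u hu).trans (hcons u v huv))
          rwa [hτ] at this
        have hout' : P.out p (τ ++ [P.msg p τ (x, y)]) = true := by
          by_cases hu : (P.speaker p τ : ℕ) < k - 1
          · exact (hg ⟨_, hu⟩).2 rfl
          · rw [hlast τ hu]; exact hout
        have hf' := (hP (x, y)).2 ⟨p, by
          simpa only [NProt.run, buildTranscript, ht'] using hout'⟩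
        exact ((hf _ _).1 hf').symm
      · rintro rfl j
        exact ⟨fun u v huv _ => hcons u v huv, fun _ => hout⟩
  have hclog : ((Nat.clog 2 N : ℕ) : ℝ) ≤ Real.logb 2 N + 1 := by
    have h1 : 2 ^ (Nat.clog 2 N - 1) < N := Nat.pow_pred_clog_lt_self (by norm_num) (by omega)
    have h2 : ((Nat.clog 2 N - 1 : ℕ) : ℝ) ≤ Real.logb 2 N := by
      rw [Real.le_logb_iff_rpow_le (by norm_num) (by exact_mod_cast (by omega : 0 < N)),
        Real.rpow_natCast]
      exact_mod_cast h1.le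
    have h3 : Nat.clog 2 N ≤ (Nat.clog 2 N - 1) + 1 := by omega
    have h4 : ((Nat.clog 2 N : ℕ) : ℝ) ≤ ((Nat.clog 2 N - 1 : ℕ) : ℝ) + 1 := by exact_mod_cast h3
    linarith
  have hR : (NHelp (nofVis (k - 1) (Fin n)) A b : ℝ) + 1 ≤ a + d + Nat.clog 2 N + k := by
    have : NHelp (nofVis (k - 1) (Fin n)) A b + 1 ≤ a + d + Nat.clog 2 N + k := by omega
    exact_mod_cast this
  refine (min_le_left _ _).trans ?_
  push_cast
  linarith
end
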